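/- Let μ be a Borel probability measure on SL₂(ℝ) with a finite exponential moment whose support generates a Zariski dense subgroup. There exists a constant C > 0 such that for all real numbers s, t and every x ∈ X, Σ_{n≥0} μ^{*n}{ g : σ(g,x) − t ∈ [0, s] } ≤ C · max{1, s}. -/

import Mathlib

open MeasureTheory Filter

noncomputable section

abbrev SL2 := Matrix.SpecialLinearGroup (Fin 2) ℝ

abbrev PX := Projectivization ℝ (Fin 2 → ℝ)

instance : TopologicalSpace SL2 := instTopologicalSpaceSubtype
instance : TopologicalSpace PX := instTopologicalSpaceQuotient
instance : MeasurableSpace SL2 := borel _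
instance : MeasurableSpace PX := borel _

/-- Euclidean norm on ℝ². -/
def enorm2 (v : Fin 2 → ℝ) : ℝ := Real.sqrt (v 0 ^ 2 + v 1 ^ 2)

/-- Operator norm of g ∈ SL₂(ℝ) w.r.t. the Euclidean norm on ℝ². -/
def opNorm (g : SL2) : ℝ :=
  ‖Matrix.toEuclideanCLM (𝕜 := ℝ) (n := Fin 2) (g : Matrix (Fin 2) (Fin 2) ℝ)‖

/-- Cartan projection κ(g) = log ‖g‖. -/
def kappa (g : SL2) : ℝ := Real.log (opNorm g)

/-- The projective action of SL₂(ℝ) on ℙ(ℝ²). -/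
def act (g : SL2) (x : PX) : PX :=
  Projectivization.map ((Matrix.SpecialLinearGroup.toLin' g).toLinearMap)
    (LinearEquiv.injective _) x

/-- The norm cocycle σ(g, ℝv) = log (‖gv‖/‖v‖). -/
def cocycle (g : SL2) (x : PX) : ℝ :=
  Real.log (enorm2 ((g : Matrix (Fin 2) (Fin 2) ℝ).mulVec x.rep) / enorm2 x.rep)

/-- The sine distance d(ℝv, ℝw) = |det(v,w)|/(‖v‖‖w‖) on ℙ(ℝ²). -/
def projDist (x y : PX) : ℝ :=
  |x.rep 0 * y.rep 1 - x.rep 1 * y.rep 0| / (enorm2 x.rep * enorm2 y.rep)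

/-- An angle θ(x) ∈ ℝ representing x = ℝ(cos θ, sin θ). -/
def pangle (x : PX) : ℝ := Complex.arg (x.rep 0 + x.rep 1 * Complex.I)

/-- The (topological) support of a measure. -/
def measSupp (μ : Measure SL2) : Set SL2 :=
  {g | ∀ U : Set SL2, IsOpen U → g ∈ U → 0 < μ U}

/-- μ has a finite exponential moment. -/
def HasExpMoment (μ : Measure SL2) : Prop :=
  ∃ ε₁ > (0 : ℝ), ∫⁻ g, ENNReal.ofReal (opNorm g ^ ε₁) ∂μ < ⊤

/-- The group generated by the support of μ is Zariski dense in SL₂(ℝ),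
equivalently it is not solvable. -/
def ZariskiDense (μ : Measure SL2) : Prop :=
  ¬ IsSolvable (Subgroup.closure (measSupp μ))

/-- ν is μ-stationary: μ ∗ ν = ν. -/
def IsStationaryMeas (μ : Measure SL2) (ν : Measure PX) : Prop :=
  μ.bind (fun g => ν.map (act g)) = ν

/-- The product g₁ ⋯ gₙ of a word (g₁, …, gₙ). -/
def word {n : ℕ} (g : Fin n → SL2) : SL2 := (List.ofFn g).prod

/-- The product measure μ^{⊗n} on words of length n. -/
def μpi (μ : Measure SL2) (n : ℕ) : Measure (Fin n → SL2) := Measure.pi fun _ => μ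

instance instSL2Borel : BorelSpace SL2 := ⟨rfl⟩

instance instSL2TopGroup : IsTopologicalGroup SL2 :=
  Matrix.SpecialLinearGroup.topologicalGroup

instance instSL2SecondCountable : SecondCountableTopology SL2 :=
  haveI : SecondCountableTopology (Matrix (Fin 2) (Fin 2) ℝ) :=
    inferInstanceAs (SecondCountableTopology (Fin 2 → Fin 2 → ℝ))
  TopologicalSpace.Subtype.secondCountableTopology
    {A : Matrix (Fin 2) (Fin 2) ℝ | A.det = 1}

instance instSL2Mul2 : MeasurableMul₂ SL2 := inferInstance
instance instSL2Inv : MeasurableInv SL2 := inferInstance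

lemma le_of_sq_le_sq' {a b : ℝ} (h : a ^ 2 ≤ b ^ 2) (hb : 0 ≤ b) : a ≤ b :=
  (le_abs_self a).trans (abs_le_of_sq_le_sq h hb)

def ap (g : SL2) (v : Fin 2 → ℝ) : Fin 2 → ℝ := (g : Matrix (Fin 2) (Fin 2) ℝ).mulVec v

def NN (g : SL2) : ℝ := Real.sqrt (g.1 0 0 ^ 2 + g.1 0 1 ^ 2 + g.1 1 0 ^ 2 + g.1 1 1 ^ 2)

lemma ap_zero (g : SL2) (v : Fin 2 → ℝ) : ap g v 0 = g.1 0 0 * v 0 + g.1 0 1 * v 1 := by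
  simp [ap, Matrix.mulVec, dotProduct, Fin.sum_univ_two]

lemma ap_one' (g : SL2) (v : Fin 2 → ℝ) : ap g v 1 = g.1 1 0 * v 0 + g.1 1 1 * v 1 := by
  simp [ap, Matrix.mulVec, dotProduct, Fin.sum_univ_two]

lemma ap_mul (g h : SL2) (v : Fin 2 → ℝ) : ap (g * h) v = ap g (ap h v) := by
  unfold ap; rw [Matrix.mulVec_mulVec]; rfl

lemma ap_id (v : Fin 2 → ℝ) : ap 1 v = v := by simp [ap]

lemma ap_smul (g : SL2) (c : ℝ) (v : Fin 2 → ℝ) : ap g (c • v) = c • ap g v := by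
  simp [ap, Matrix.mulVec_smul]

lemma det_eq (g : SL2) : g.1 0 0 * g.1 1 1 - g.1 0 1 * g.1 1 0 = 1 := by
  have := g.2; rwa [Matrix.det_fin_two] at this

lemma enorm2_sq (v : Fin 2 → ℝ) : enorm2 v ^ 2 = v 0 ^ 2 + v 1 ^ 2 :=
  Real.sq_sqrt (by positivity)

lemma enorm2_nonneg (v : Fin 2 → ℝ) : 0 ≤ enorm2 v := Real.sqrt_nonneg _

lemma enorm2_smul (c : ℝ) (v : Fin 2 → ℝ) : enorm2 (c • v) = |c| * enorm2 v := by
  unfold enorm2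
  rw [← Real.sqrt_sq_eq_abs, ← Real.sqrt_mul (sq_nonneg c)]
  congr 1; simp; ring

lemma enorm2_pos {v : Fin 2 → ℝ} (h : v ≠ 0) : 0 < enorm2 v := by
  apply Real.sqrt_pos.2
  by_contra hc
  apply h
  have h0 : v 0 = 0 := by nlinarith [sq_nonneg (v 0), sq_nonneg (v 1)]
  have h1 : v 1 = 0 := by nlinarith [sq_nonneg (v 0), sq_nonneg (v 1)]
  ext i; fin_cases i <;> simp [h0, h1]

lemma NN_sq (g : SL2) :
    NN g ^ 2 = g.1 0 0 ^ 2 + g.1 0 1 ^ 2 + g.1 1 0 ^ 2 + g.1 1 1 ^ 2 :=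
  Real.sq_sqrt (by positivity)

lemma one_le_NN (g : SL2) : 1 ≤ NN g := by
  apply Real.le_sqrt_of_sq_le
  nlinarith [det_eq g, sq_nonneg (g.1 0 0 - g.1 1 1), sq_nonneg (g.1 0 1 + g.1 1 0)]

lemma NN_pos (g : SL2) : 0 < NN g := lt_of_lt_of_le one_pos (one_le_NN g)

lemma enorm2_ap_le (g : SL2) (v : Fin 2 → ℝ) : enorm2 (ap g v) ≤ NN g * enorm2 v := by
  apply le_of_sq_le_sq' ?_ (mul_nonneg (NN_pos g).le (enorm2_nonneg v))
  rw [mul_pow, enorm2_sq, enorm2_sq, NN_sq, ap_zero, ap_one']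
  nlinarith [sq_nonneg (g.1 0 0 * v 1 - g.1 0 1 * v 0), sq_nonneg (g.1 1 0 * v 1 - g.1 1 1 * v 0)]

lemma NN_inv (g : SL2) : NN g⁻¹ = NN g := by
  unfold NN
  rw [Matrix.SpecialLinearGroup.SL2_inv_expl]
  congr 1; simp; ring

lemma le_enorm2_ap (g : SL2) (v : Fin 2 → ℝ) : enorm2 v ≤ NN g * enorm2 (ap g v) := by
  have := enorm2_ap_le g⁻¹ (ap g v)
  rwa [← ap_mul, inv_mul_cancel, ap_id, NN_inv] at this

lemma NN_mul_le (g h : SL2) : NN (g * h) ≤ NN g * NN h := by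
  apply le_of_sq_le_sq' ?_ (mul_nonneg (NN_pos g).le (NN_pos h).le)
  rw [mul_pow, NN_sq, NN_sq, NN_sq]
  have e : ∀ i j, (g * h).1 i j = g.1 i 0 * h.1 0 j + g.1 i 1 * h.1 1 j := by
    intro i j
    simp [Matrix.mul_apply, Fin.sum_univ_two]
  simp only [e]
  nlinarith [sq_nonneg (g.1 0 0 * h.1 1 0 - g.1 0 1 * h.1 0 0),
    sq_nonneg (g.1 0 0 * h.1 1 1 - g.1 0 1 * h.1 0 1),
    sq_nonneg (g.1 1 0 * h.1 1 0 - g.1 1 1 * h.1 0 0),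
    sq_nonneg (g.1 1 0 * h.1 1 1 - g.1 1 1 * h.1 0 1)]

lemma enorm2_ap_pos (g : SL2) {v : Fin 2 → ℝ} (h : enorm2 v = 1) : 0 < enorm2 (ap g v) := by
  have h1 := le_enorm2_ap g v
  rw [h] at h1
  by_contra hc
  nlinarith [NN_pos g, enorm2_nonneg (ap g v)]

lemma NN_le_opNorm (g : SL2) : NN g ≤ 2 * opNorm g := by
  have key : ∀ v : Fin 2 → ℝ, enorm2 (ap g v) ≤ opNorm g * enorm2 v := by
    intro v
    have := (Matrix.toEuclideanCLM (𝕜 := ℝ) (n := Fin 2)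
      (g : Matrix (Fin 2) (Fin 2) ℝ)).le_opNorm (WithLp.toLp 2 v)
    simpa [EuclideanSpace.norm_eq, Fin.sum_univ_two, enorm2, opNorm, ap,
      Matrix.toEuclideanCLM_toLp] using this
  have h0 := key ![1, 0]
  have h1 := key ![0, 1]
  have e0 : enorm2 ![1, 0] = 1 := by simp [enorm2]
  have e1 : enorm2 ![0, 1] = 1 := by simp [enorm2]
  rw [e0, mul_one] at h0
  rw [e1, mul_one] at h1
  have hop : 0 ≤ opNorm g := norm_nonneg _
  have s0 := pow_le_pow_left₀ (enorm2_nonneg _) h0 2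
  have s1 := pow_le_pow_left₀ (enorm2_nonneg _) h1 2
  rw [enorm2_sq, ap_zero, ap_one'] at s0 s1
  simp at s0 s1
  apply le_of_sq_le_sq' ?_ (by positivity)
  rw [NN_sq]
  nlinarith

def dt (v w : Fin 2 → ℝ) : ℝ := v 0 * w 1 - v 1 * w 0

lemma dt_ap (g : SL2) (v w : Fin 2 → ℝ) : dt (ap g v) (ap g w) = dt v w := by
  unfold dt
  rw [ap_zero, ap_one', ap_zero, ap_one']
  linear_combination (v 0 * w 1 - v 1 * w 0) * det_eq g

lemma exists_dir (g : SL2) : ∃ w : Fin 2 → ℝ, enorm2 w = 1 ∧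
    ∀ v, NN g / 2 * |dt v w| ≤ enorm2 (ap g v) := by
  have main : ∀ a b : ℝ, NN g / 2 ≤ enorm2 ![a, b] →
      (∀ v, |a * v 0 + b * v 1| ≤ enorm2 (ap g v)) → ∃ w : Fin 2 → ℝ, enorm2 w = 1 ∧
    ∀ v, NN g / 2 * |dt v w| ≤ enorm2 (ap g v) := by
    intro a b hab hv
    have hp : 0 < enorm2 ![a, b] := by linarith [NN_pos g]
    have e : enorm2 ![-b, a] = enorm2 ![a, b] := by simp [enorm2, add_comm]
    refine ⟨(enorm2 ![a, b])⁻¹ • ![-b, a], ?_, fun v => ?_⟩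
    · rw [enorm2_smul, e, abs_of_pos (inv_pos.2 hp), inv_mul_cancel₀ hp.ne']
    · have : dt v ((enorm2 ![a, b])⁻¹ • ![-b, a]) = (enorm2 ![a, b])⁻¹ * (a * v 0 + b * v 1) := by
        simp [dt]; ring
      rw [this, abs_mul, abs_of_pos (inv_pos.2 hp)]
      calc _ ≤ enorm2 ![a, b] * ((enorm2 ![a, b])⁻¹ * |a * v 0 + b * v 1|) := by gcongr
        _ = |a * v 0 + b * v 1| := by field_simp
        _ ≤ _ := hv v
  rcases le_total (g.1 0 0 ^ 2 + g.1 0 1 ^ 2) (g.1 1 0 ^ 2 + g.1 1 1 ^ 2) with h | h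
  · apply main (g.1 1 0) (g.1 1 1)
    · apply le_of_sq_le_sq' ?_ (enorm2_nonneg _)
      rw [div_pow, NN_sq, enorm2_sq]; simp; nlinarith [sq_nonneg (g.1 0 0), sq_nonneg (g.1 0 1), sq_nonneg (g.1 1 0), sq_nonneg (g.1 1 1)]
    · intro v
      rw [← ap_one']
      apply Real.le_sqrt_of_sq_le; rw [sq_abs]; nlinarith [sq_nonneg (ap g v 0)]
  · apply main (g.1 0 0) (g.1 0 1)
    · apply le_of_sq_le_sq' ?_ (enorm2_nonneg _)
      rw [div_pow, NN_sq, enorm2_sq]; simp; nlinarith [sq_nonneg (g.1 0 0), sq_nonneg (g.1 0 1), sq_nonneg (g.1 1 0), sq_nonneg (g.1 1 1)]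
    · intro v
      rw [← ap_zero]
      apply Real.le_sqrt_of_sq_le; rw [sq_abs]; nlinarith [sq_nonneg (ap g v 1)]

lemma continuous_entry (i j : Fin 2) : Continuous fun g : SL2 => g.1 i j :=
  (continuous_subtype_val (p := fun A : Matrix (Fin 2) (Fin 2) ℝ => A.det = 1)).matrix_elem i j

lemma continuous_NN : Continuous NN := by
  unfold NN
  have := continuous_entry
  fun_prop

lemma continuous_enorm2 : Continuous enorm2 := by
  unfold enorm2
  fun_prop

lemma continuous_ap : Continuous fun p : SL2 × (Fin 2 → ℝ) => ap p.1 p.2 := by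
  have := continuous_entry
  refine continuous_pi fun i => ?_
  fin_cases i
  · simp only [Fin.zero_eta, ap_zero]
    fun_prop
  · simp only [Fin.mk_one, ap_one']
    fun_prop

abbrev Sph := {v : Fin 2 → ℝ // enorm2 v = 1}

instance instSphCompact : CompactSpace Sph := by
  refine (isCompact_iff_compactSpace (s := {v : Fin 2 → ℝ | enorm2 v = 1})).1 ?_
  refine Metric.isCompact_of_isClosed_isBounded
    (isClosed_eq continuous_enorm2 continuous_const) ?_
  refine (Metric.isBounded_closedBall (x := (0 : Fin 2 → ℝ)) (r := 1)).subset ?_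
  intro v hv
  have h := enorm2_sq v
  rw [show enorm2 v = 1 from hv] at h
  rw [mem_closedBall_zero_iff, pi_norm_le_iff_of_nonneg zero_le_one]
  intro i
  rw [Real.norm_eq_abs, abs_le_one_iff_mul_self_le_one]
  fin_cases i <;> simp <;> nlinarith [sq_nonneg (v 0), sq_nonneg (v 1)]

instance instSphNonempty : Nonempty Sph := ⟨⟨![1, 0], by simp [enorm2]⟩⟩

def sact (g : SL2) (v : Sph) : Sph :=
  ⟨(enorm2 (ap g v.1))⁻¹ • ap g v.1, by
    have := enorm2_ap_pos g v.2
    rw [enorm2_smul, abs_of_pos (inv_pos.2 this), inv_mul_cancel₀ this.ne']⟩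

def sg (g : SL2) (v : Sph) : ℝ := Real.log (enorm2 (ap g v.1))

lemma ap_eq_sact (g : SL2) (v : Sph) : ap g v.1 = enorm2 (ap g v.1) • (sact g v).1 := by
  have := enorm2_ap_pos g v.2
  simp [sact, smul_smul, this.ne']

lemma enorm2_ap_mul (g h : SL2) (v : Sph) :
    enorm2 (ap (g * h) v.1) = enorm2 (ap h v.1) * enorm2 (ap g (sact h v).1) := by
  rw [ap_mul, ap_eq_sact h v, ap_smul, enorm2_smul, abs_of_nonneg (enorm2_nonneg _)]
  rw [← ap_eq_sact h v]

lemma sact_mul (g h : SL2) (v : Sph) : sact (g * h) v = sact g (sact h v) := by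
  have h1 := enorm2_ap_pos h v.2
  have h2 := enorm2_ap_pos g (sact h v).2
  apply Subtype.ext
  change (enorm2 (ap (g * h) v.1))⁻¹ • ap (g * h) v.1 =
    (enorm2 (ap g (sact h v).1))⁻¹ • ap g (sact h v).1
  rw [enorm2_ap_mul, ap_mul, ap_eq_sact h v, ap_smul, smul_smul, ← ap_eq_sact h v]
  congr 1
  field_simp

lemma sact_one (v : Sph) : sact 1 v = v := by
  apply Subtype.ext
  simp [sact, ap_id, v.2]

lemma sg_mul (g h : SL2) (v : Sph) : sg (g * h) v = sg g (sact h v) + sg h v := by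
  unfold sg
  rw [enorm2_ap_mul, Real.log_mul (enorm2_ap_pos h v.2).ne' (enorm2_ap_pos g (sact h v).2).ne',
    add_comm]

lemma abs_sg_le (g : SL2) (v : Sph) : |sg g v| ≤ Real.log (NN g) := by
  have h1 := enorm2_ap_pos g v.2
  rw [abs_le]
  constructor
  · rw [← Real.log_inv]
    apply Real.log_le_log (inv_pos.2 (NN_pos g))
    rw [inv_le_iff_one_le_mul₀' (NN_pos g)]
    have := le_enorm2_ap g v.1
    rwa [v.2] at this
  · apply Real.log_le_log h1
    have := enorm2_ap_le g v.1
    rwa [v.2, mul_one] at this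

lemma logNN_nonneg (g : SL2) : 0 ≤ Real.log (NN g) := Real.log_nonneg (one_le_NN g)

lemma continuous_enap : Continuous fun p : SL2 × Sph => enorm2 (ap p.1 p.2.1) :=
  continuous_enorm2.comp (continuous_ap.comp
    (continuous_fst.prodMk (continuous_subtype_val.comp continuous_snd)))

lemma continuous_sact : Continuous fun p : SL2 × Sph => sact p.1 p.2 := by
  apply Continuous.subtype_mk
  exact (continuous_enap.inv₀ fun p => (enorm2_ap_pos p.1 p.2.2).ne').smul
    (continuous_ap.comp (continuous_fst.prodMk (continuous_subtype_val.comp continuous_snd)))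

lemma continuous_sg : Continuous fun p : SL2 × Sph => sg p.1 p.2 :=
  continuous_enap.log fun p => (enorm2_ap_pos p.1 p.2.2).ne'

def cv (μ : Measure SL2) : ℕ → Measure SL2
  | 0 => Measure.dirac 1
  | n + 1 => Measure.mconv (cv μ n) μ

instance cv_prob (μ : Measure SL2) [IsProbabilityMeasure μ] (n : ℕ) :
    IsProbabilityMeasure (cv μ n) := by
  induction n with
  | zero => unfold cv; infer_instance
  | succ n ih => unfold cv; infer_instance

lemma cv_add (μ : Measure SL2) [IsProbabilityMeasure μ] (m n : ℕ) :
    cv μ (m + n) = Measure.mconv (cv μ m) (cv μ n) := by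
  induction n with
  | zero => simp [cv, Measure.mconv_dirac_one]
  | succ n ih => rw [← add_assoc]; simp only [cv]; rw [ih, Measure.mconv_assoc]

lemma cv_one (μ : Measure SL2) [IsProbabilityMeasure μ] : cv μ 1 = μ := by
  simp [cv, Measure.dirac_one_mconv]

lemma continuous_word {n : ℕ} : Continuous (word (n := n)) := by
  induction n with
  | zero => unfold word; simp only [List.ofFn_zero]; exact continuous_const
  | succ n ih =>
    unfold word at *
    simp only [List.ofFn_succ, List.prod_cons]
    exact (continuous_apply 0).mul (ih.comp (continuous_pi fun i => continuous_apply _))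

lemma map_word (μ : Measure SL2) [IsProbabilityMeasure μ] (n : ℕ) :
    (μpi μ n).map word = cv μ n := by
  induction n with
  | zero =>
    have : (word (n := 0)) = fun _ => 1 := by ext1 g; simp [word]
    rw [this, Measure.map_const]
    have : IsProbabilityMeasure (μpi μ 0) := by unfold μpi; infer_instance
    simp [cv]
  | succ n ih =>
    have mp := measurePreserving_piFinSuccAbove (fun _ : Fin (n + 1) => μ) (Fin.last n)
    have e : (word (n := n + 1)) = (fun p : SL2 × (Fin n → SL2) => word p.2 * p.1) ∘
        (MeasurableEquiv.piFinSuccAbove (fun _ => SL2) (Fin.last n)) := by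
      ext1 g
      change (List.ofFn g).prod =
        (List.ofFn ((Fin.last n).removeNth g)).prod * g (Fin.last n)
      rw [List.ofFn_succ', List.prod_concat]
      congr 3
      ext1 i
      simp [Fin.removeNth]
    have hw : Measurable (word (n := n)) := continuous_word.measurable
    rw [e, ← Measure.map_map (by fun_prop) (MeasurableEquiv.measurable _)]
    unfold μpi
    rw [mp.map_eq]
    simp only [cv]
    rw [Measure.mconv, ← ih]
    have hP : IsProbabilityMeasure (μpi μ n) := by unfold μpi; infer_instance
    have h2 : ((μpi μ n).map word).prod μ =
        (μ.prod (μpi μ n)).map (fun p => (word p.2, p.1)) := by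
      have hP2 : IsProbabilityMeasure ((μpi μ n).map word) :=
        Measure.isProbabilityMeasure_map hw.aemeasurable
      rw [← Measure.prod_swap]
      have := Measure.map_prod_map μ (μpi μ n) (f := id) (g := word) measurable_id hw
      rw [Measure.map_id] at this
      rw [this, Measure.map_map measurable_swap (by fun_prop)]
      rfl
    rw [h2, Measure.map_map (by fun_prop) (by fun_prop)]
    rfl

lemma lint_cv_add (μ : Measure SL2) [IsProbabilityMeasure μ] (m n : ℕ) (f : SL2 → ENNReal)
    (hf : Measurable f) :
    ∫⁻ g, f g ∂(cv μ (m + n)) = ∫⁻ h, ∫⁻ g, f (g * h) ∂(cv μ m) ∂(cv μ n) := by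
  rw [cv_add, Measure.lintegral_mconv hf, lintegral_lintegral_swap]
  exact (hf.comp measurable_mul).aemeasurable

lemma meas_sg (v : Sph) : Measurable fun g => sg g v :=
  (continuous_sg.comp (continuous_id.prodMk continuous_const)).measurable

theorem foster (μ : Measure SL2) [IsProbabilityMeasure μ] (N : ℕ) (ε a : ℝ) (hε : 0 < ε)
    (ha0 : 0 ≤ a) (ha : a < 1)
    (h : ∀ v : Sph, ∫⁻ g, ENNReal.ofReal (Real.exp (-ε * sg g v)) ∂(cv μ N) ≤ ENNReal.ofReal a)
    (v : Sph) (t : ℝ) :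
    ∑' n : ℕ, cv μ n {g | sg g v - t ∈ Set.Icc 0 1} ≤
      ENNReal.ofReal (N * Real.exp ε / (1 - a)) := by
  let H : ℝ → ℝ := fun r => min 1 (Real.exp (-ε * r))
  have hHc : Continuous H := by fun_prop
  have hHm : Measurable H := hHc.measurable
  let u : ℕ → ENNReal := fun n => ∫⁻ g, ENNReal.ofReal (H (sg g v - t)) ∂(cv μ n)
  let p : ℕ → ENNReal := fun n => cv μ n {g | sg g v - t ∈ Set.Icc 0 1}
  set κ : ℝ := (1 - a) * Real.exp (-ε) with hκ
  have hκ0 : 0 < κ := mul_pos (by linarith) (Real.exp_pos _)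
  have hu1 : ∀ n, u n ≤ 1 := by
    intro n
    calc u n ≤ ∫⁻ g, 1 ∂(cv μ n) := lintegral_mono fun g => by
          rw [← ENNReal.ofReal_one]; exact ENNReal.ofReal_le_ofReal (min_le_left _ _)
      _ = 1 := by simp
  have hms := meas_sg v
  have step : ∀ n, u (n + N) + ENNReal.ofReal κ * p n ≤ u n := by
    intro n
    have hS : MeasurableSet {g | sg g v - t ∈ Set.Icc 0 1} :=
      measurableSet_Icc.preimage (hms.sub_const t)
    have e1 : u (n + N) = ∫⁻ h, ∫⁻ g, ENNReal.ofReal (H (sg (g * h) v - t)) ∂(cv μ N) ∂(cv μ n) := by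
      rw [add_comm]
      exact lint_cv_add μ N n (fun g => ENNReal.ofReal (H (sg g v - t)))
        (hHm.comp (hms.sub_const t)).ennreal_ofReal
    have e2 : ENNReal.ofReal κ * p n =
        ∫⁻ h, Set.indicator {g | sg g v - t ∈ Set.Icc 0 1} (fun _ => ENNReal.ofReal κ) h ∂(cv μ n) := by
      rw [lintegral_indicator hS, lintegral_const, Measure.restrict_apply_univ]
    rw [e1, e2, ← lintegral_add_right _ (measurable_const.indicator hS)]
    refine lintegral_mono fun h' => ?_
    simp only [sg_mul]
    set r := sg h' v - t with hr
    have e3 : ∀ g, sg g (sact h' v) + sg h' v - t = sg g (sact h' v) + r := fun g => by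
      rw [hr]; ring
    simp only [e3]
    rcases lt_or_ge r 0 with h0 | h0
    · have : h' ∉ {g | sg g v - t ∈ Set.Icc 0 1} := fun hc => not_le.2 h0 hc.1
      rw [Set.indicator_of_notMem this, add_zero]
      have hH : H r = 1 := min_eq_left (Real.one_le_exp (by nlinarith))
      rw [hH]
      calc _ ≤ ∫⁻ g, 1 ∂(cv μ N) := lintegral_mono fun g => by
            rw [← ENNReal.ofReal_one]; exact ENNReal.ofReal_le_ofReal (min_le_left _ _)
        _ = _ := by simp
    · have hH : H r = Real.exp (-ε * r) := min_eq_right (Real.exp_le_one_iff.2 (by nlinarith))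
      have i1 : ∫⁻ g, ENNReal.ofReal (H (sg g (sact h' v) + r)) ∂(cv μ N) ≤
          ENNReal.ofReal (Real.exp (-ε * r) * a) := by
        calc _ ≤ ∫⁻ g, ENNReal.ofReal (Real.exp (-ε * r)) *
              ENNReal.ofReal (Real.exp (-ε * sg g (sact h' v))) ∂(cv μ N) := by
              refine lintegral_mono fun g => ?_
              rw [← ENNReal.ofReal_mul (Real.exp_pos _).le, ← Real.exp_add]
              apply ENNReal.ofReal_le_ofReal
              refine (min_le_right _ _).trans (le_of_eq ?_)
              congr 1; ring
          _ ≤ _ := by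
              rw [lintegral_const_mul' _ _ ENNReal.ofReal_ne_top,
                ENNReal.ofReal_mul (Real.exp_pos _).le]
              gcongr
              exact h _
      have i2 : Set.indicator {g | sg g v - t ∈ Set.Icc 0 1} (fun _ => ENNReal.ofReal κ) h' ≤
          ENNReal.ofReal (Real.exp (-ε * r) * (1 - a)) := by
        by_cases hm : h' ∈ {g | sg g v - t ∈ Set.Icc 0 1}
        · rw [Set.indicator_of_mem hm]
          apply ENNReal.ofReal_le_ofReal
          rw [hκ, mul_comm]
          have : r ≤ 1 := hm.2
          have : Real.exp (-ε) ≤ Real.exp (-ε * r) := Real.exp_le_exp.2 (by nlinarith)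
          nlinarith
        · rw [Set.indicator_of_notMem hm]; exact zero_le
      refine (add_le_add i1 i2).trans ?_
      rw [← ENNReal.ofReal_add (mul_nonneg (Real.exp_pos _).le ha0)
        (mul_nonneg (Real.exp_pos _).le (by linarith)), hH]
      apply ENNReal.ofReal_le_ofReal
      apply le_of_eq; ring
  have tot : ∀ M, ENNReal.ofReal κ * ∑ n ∈ Finset.range M, p n ≤ N := by
    intro M
    have h1 : ∑ n ∈ Finset.range M, u (n + N) + ENNReal.ofReal κ * ∑ n ∈ Finset.range M, p n ≤
        ∑ n ∈ Finset.range M, u n := by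
      rw [Finset.mul_sum, ← Finset.sum_add_distrib]
      exact Finset.sum_le_sum fun n _ => step n
    have h2 : ∑ n ∈ Finset.range M, u n ≤ ∑ n ∈ Finset.range M, u (n + N) + N := by
      calc _ ≤ ∑ n ∈ Finset.range (N + M), u n :=
            Finset.sum_le_sum_of_subset (Finset.range_mono (by omega))
        _ = ∑ n ∈ Finset.range N, u n + ∑ n ∈ Finset.range M, u (n + N) := by
            rw [Finset.sum_range_add]; simp only [add_comm N]
        _ ≤ ∑ n ∈ Finset.range N, 1 + ∑ n ∈ Finset.range M, u (n + N) := by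
            gcongr with i _; exact hu1 i
        _ = _ := by simp [add_comm]
    have hfin : ∑ n ∈ Finset.range M, u (n + N) ≠ ⊤ := by
      refine (ENNReal.sum_lt_top.2 fun n _ => ?_).ne
      exact (hu1 _).trans_lt ENNReal.one_lt_top
    exact (ENNReal.add_le_add_iff_left hfin).1 (h1.trans h2)
  apply ENNReal.tsum_le_of_sum_range_le
  intro M
  have hk := tot M
  rw [mul_comm] at hk
  have := (ENNReal.le_div_iff_mul_le (Or.inl (ENNReal.ofReal_pos.2 hκ0).ne')
    (Or.inl ENNReal.ofReal_ne_top)).2 hk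
  refine this.trans (le_of_eq ?_)
  rw [← ENNReal.ofReal_natCast, ← ENNReal.ofReal_div_of_pos hκ0]
  congr 1
  rw [hκ, Real.exp_neg]
  have : (1 - a) ≠ 0 := by linarith
  field_simp

theorem reduction (μ : Measure SL2) [IsProbabilityMeasure μ]
    (h : ∃ N : ℕ, ∃ ε > 0, ∃ a : ℝ, 0 ≤ a ∧ a < 1 ∧ ∀ v : Sph,
      ∫⁻ g, ENNReal.ofReal (Real.exp (-ε * sg g v)) ∂(cv μ N) ≤ ENNReal.ofReal a) :
    ∃ C > (0 : ℝ), ∀ (s t : ℝ) (x : PX),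
      (∑' n : ℕ, μpi μ n {g | cocycle (word g) x - t ∈ Set.Icc 0 s}) ≤
        ENNReal.ofReal (C * max 1 s) := by
  obtain ⟨N, ε, hε, a, ha0, ha, h⟩ := h
  have key := foster μ N ε a hε ha0 ha h
  set C := N * Real.exp ε / (1 - a) with hC
  have hC0 : 0 ≤ C := div_nonneg (by positivity) (by linarith)
  refine ⟨2 * C + 1, by positivity, fun s t x => ?_⟩
  have hx : 0 < enorm2 x.rep := enorm2_pos x.rep_nonzero
  let v : Sph := ⟨(enorm2 x.rep)⁻¹ • x.rep, by
    rw [enorm2_smul, abs_of_pos (inv_pos.2 hx), inv_mul_cancel₀ hx.ne']⟩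
  have hco : ∀ g, cocycle g x = sg g v := by
    intro g
    change Real.log (enorm2 (ap g x.rep) / enorm2 x.rep) =
      Real.log (enorm2 (ap g ((enorm2 x.rep)⁻¹ • x.rep)))
    rw [ap_smul, enorm2_smul, abs_of_pos (inv_pos.2 hx)]
    congr 1; field_simp
  have hms := meas_sg v
  have e : ∀ n, μpi μ n {g | cocycle (word g) x - t ∈ Set.Icc 0 s} =
      cv μ n {g | sg g v - t ∈ Set.Icc 0 s} := by
    intro n
    have hS : MeasurableSet {g | sg g v - t ∈ Set.Icc 0 s} :=
      measurableSet_Icc.preimage (hms.sub_const t)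
    rw [← map_word, Measure.map_apply continuous_word.measurable hS]
    simp only [hco]; rfl
  simp only [e]
  rcases lt_or_ge s 0 with hs | hs
  · simp [Set.Icc_eq_empty (not_le.2 hs)]
  · have cover : ∀ n, cv μ n {g | sg g v - t ∈ Set.Icc 0 s} ≤
        ∑ i ∈ Finset.range (⌊s⌋₊ + 1), cv μ n {g | sg g v - (t + i) ∈ Set.Icc 0 1} := by
      intro n
      refine (measure_mono ?_).trans (measure_biUnion_finset_le _ _)
      intro g hg
      simp only [Set.mem_ofPred_eq, Set.mem_Icc] at hg
      simp only [Set.mem_iUnion, Set.mem_ofPred_eq, Set.mem_Icc, Finset.mem_range, exists_prop]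
      refine ⟨⌊sg g v - t⌋₊, ?_, ?_, ?_⟩
      · exact Nat.lt_succ_of_le (Nat.floor_le_floor hg.2)
      · linarith [Nat.floor_le hg.1]
      · linarith [Nat.lt_floor_add_one (sg g v - t)]
    calc _ ≤ ∑' n, ∑ i ∈ Finset.range (⌊s⌋₊ + 1), cv μ n {g | sg g v - (t + i) ∈ Set.Icc 0 1} :=
          ENNReal.tsum_le_tsum cover
      _ = ∑ i ∈ Finset.range (⌊s⌋₊ + 1), ∑' n, cv μ n {g | sg g v - (t + i) ∈ Set.Icc 0 1} :=
          Summable.tsum_finsetSum fun i _ => ENNReal.summable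
      _ ≤ ∑ i ∈ Finset.range (⌊s⌋₊ + 1), ENNReal.ofReal C := Finset.sum_le_sum fun i _ => key v _
      _ = ENNReal.ofReal ((⌊s⌋₊ + 1 : ℕ) * C) := by
          rw [Finset.sum_const, Finset.card_range, nsmul_eq_mul,
            ENNReal.ofReal_mul (by positivity), ENNReal.ofReal_natCast]
      _ ≤ _ := by
          apply ENNReal.ofReal_le_ofReal
          push_cast
          have := Nat.floor_le hs
          have h1 := le_max_left 1 s
          have h2 := le_max_right 1 s
          have : (⌊s⌋₊ : ℝ) + 1 ≤ 2 * max 1 s := by linarith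
          nlinarith

lemma comm_of_form (M : Matrix (Fin 2) (Fin 2) ℝ) (hs : M 0 1 = M 1 0) (h0 : M ≠ 0) (g h : SL2)
    (hg : g.1 * M * g.1.transpose = M) (hh : h.1 * M * h.1.transpose = M) : g * h = h * g := by
  have rel : ∀ g : SL2, g.1 * M * g.1.transpose = M →
      M 0 0 * (g.1 0 0 - g.1 1 1) + 2 * g.1 0 1 * M 0 1 = 0 ∧
      g.1 0 1 * M 1 1 + M 0 0 * g.1 1 0 = 0 ∧
      M 1 1 * (g.1 0 0 - g.1 1 1) - 2 * g.1 1 0 * M 0 1 = 0 := by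
    intro g hg
    have hd := det_eq g
    have e00 := congrFun (congrFun hg 0) 0
    have e01 := congrFun (congrFun hg 0) 1
    have e10 := congrFun (congrFun hg 1) 0
    have e11 := congrFun (congrFun hg 1) 1
    simp only [Matrix.mul_apply, Fin.sum_univ_two, Matrix.transpose_apply, ← hs] at e00 e01 e10 e11
    set a := g.1 0 0
    set b := g.1 0 1
    set c := g.1 1 0
    set d := g.1 1 1
    set x := M 0 0
    set y := M 0 1
    set z := M 1 1
    refine ⟨?_, ?_, ?_⟩
    · linear_combination d * e00 - b * e01 - (x * a + y * b) * hd
    · linear_combination (-c) * e00 + a * e01 - (x * b * 0 + y * a + b * z - y*a -b*z + (y*a + z*b)) * hd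
    · linear_combination c * e01 - a * e11 + (y * c + z * d) * hd
  obtain ⟨p1, p2, p3⟩ := rel g hg
  obtain ⟨q1, q2, q3⟩ := rel h hh
  have key : g.1 0 1 * h.1 1 0 = h.1 0 1 * g.1 1 0 ∧
      (g.1 0 0 - g.1 1 1) * h.1 0 1 = (h.1 0 0 - h.1 1 1) * g.1 0 1 ∧
      (g.1 0 0 - g.1 1 1) * h.1 1 0 = (h.1 0 0 - h.1 1 1) * g.1 1 0 := by
    set a := g.1 0 0
    set b := g.1 0 1
    set c := g.1 1 0
    set d := g.1 1 1
    set a' := h.1 0 0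
    set b' := h.1 0 1
    set c' := h.1 1 0
    set d' := h.1 1 1
    by_cases hx : M 0 0 = 0
    · by_cases hz : M 1 1 = 0
      · have hy : M 0 1 ≠ 0 := by
          intro hy
          apply h0
          ext i j
          fin_cases i <;> fin_cases j <;> simp [hx, hz, hy, ← hs]
        rw [hx] at p1 q1
        rw [hz] at p3 q3
        have b0 : b = 0 := by
          have : 2 * M 0 1 * b = 0 := by linarith
          simpa [hy] using this
        have c0 : c = 0 := by
          have : 2 * M 0 1 * c = 0 := by linarith
          simpa [hy] using this
        have b0' : b' = 0 := by
          have : 2 * M 0 1 * b' = 0 := by linarith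
          simpa [hy] using this
        have c0' : c' = 0 := by
          have : 2 * M 0 1 * c' = 0 := by linarith
          simpa [hy] using this
        simp [b0, c0, b0', c0']
      · refine ⟨mul_left_cancel₀ hz ?_, mul_left_cancel₀ hz ?_, mul_left_cancel₀ hz ?_⟩
        · linear_combination c' * p2 - c * q2
        · linear_combination b' * p3 - b * q3 + 2 * M 0 1 * (mul_left_cancel₀ hz (by linear_combination c' * p2 - c * q2) : b * c' = b' * c) * (-1)
        · linear_combination c' * p3 - c * q3
    · refine ⟨mul_left_cancel₀ hx ?_, mul_left_cancel₀ hx ?_, mul_left_cancel₀ hx ?_⟩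
      · linear_combination b * q2 - b' * p2
      · linear_combination b' * p1 - b * q1
      · linear_combination c' * p1 - c * q1 - 2 * M 0 1 * (mul_left_cancel₀ hx (by linear_combination b * q2 - b' * p2) : b * c' = b' * c)
  obtain ⟨k1, k2, k3⟩ := key
  apply Subtype.ext
  change g.1 * h.1 = h.1 * g.1
  ext i j
  fin_cases i <;> fin_cases j <;> simp [Matrix.mul_apply, Fin.sum_univ_two]
  · linear_combination k1
  · linear_combination k2
  · linear_combination -k3
  · linear_combination -k1

lemma solv_of_form (Γ : Subgroup SL2) (M : Matrix (Fin 2) (Fin 2) ℝ) (hs : M 0 1 = M 1 0)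
    (h0 : M ≠ 0) (h : ∀ g ∈ Γ, ∃ c : ℝ, g.1 * M * g.1.transpose = c • M) :
    Group.IsSolvable Γ := by
  choose! c hc using h
  have uniq : ∀ a b : ℝ, a • M = b • M → a = b := fun a b hab => smul_left_injective ℝ h0 hab
  let χ : Γ →* ℝ :=
    { toFun := fun g => c g.1
      map_one' := by
        apply uniq
        change c 1 • M = _
        rw [← hc 1 Γ.one_mem]
        change (1 : Matrix (Fin 2) (Fin 2) ℝ) * M * (1 : Matrix (Fin 2) (Fin 2) ℝ).transpose = _
        simp
      map_mul' := by
        intro g k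
        apply uniq
        change c (g.1 * k.1) • M = _
        rw [← hc _ (Γ.mul_mem g.2 k.2)]
        change (g.1.1 * k.1.1) * M * (g.1.1 * k.1.1).transpose = _
        rw [Matrix.transpose_mul]
        calc _ = g.1.1 * (k.1.1 * M * k.1.1.transpose) * g.1.1.transpose := by
              simp only [Matrix.mul_assoc]
          _ = _ := by
              rw [hc _ k.2, Matrix.mul_smul, Matrix.smul_mul, hc _ g.2, smul_smul, mul_comm] }
  have hk : ∀ g : Γ, g ∈ χ.toHomUnits.ker → g.1.1 * M * g.1.1.transpose = M := by
    intro g hg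
    rw [MonoidHom.mem_ker] at hg
    have := congrArg Units.val hg
    have h1 : c g.1 = 1 := this
    rw [hc _ g.2, h1, one_smul]
  have : Group.IsSolvable χ.toHomUnits.ker := by
    apply Group.isSolvable_of_comm
    intro a b
    apply Subtype.ext
    apply Subtype.ext
    exact comm_of_form M hs h0 a.1.1 b.1.1 (hk _ a.2) (hk _ b.2)
  exact Group.isSolvable_of_ker_le_range χ.toHomUnits.ker.subtype χ.toHomUnits (by simp)

lemma mp_ap (g : SL2) : MeasurePreserving (ap g) volume volume := by
  have hd : Matrix.det g.1 = 1 := g.2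
  have := Real.map_matrix_volume_pi_eq_smul_volume_pi (M := g.1) (by rw [hd]; exact one_ne_zero)
  rw [hd] at this
  simp only [inv_one, abs_one, ENNReal.ofReal_one, one_smul] at this
  refine ⟨?_, ?_⟩
  · exact (continuous_ap.comp (continuous_const.prodMk continuous_id)).measurable
  · exact this

lemma cont_ap (g : SL2) : Continuous (ap g) :=
  continuous_ap.comp (continuous_const.prodMk continuous_id)

lemma ap_inv_ap (g : SL2) (v : Fin 2 → ℝ) : ap g⁻¹ (ap g v) = v := by
  rw [← ap_mul, inv_mul_cancel, ap_id]

lemma ap_ap_inv (g : SL2) (v : Fin 2 → ℝ) : ap g (ap g⁻¹ v) = v := by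
  rw [← ap_mul, mul_inv_cancel, ap_id]

lemma emb_ap (g : SL2) : MeasurableEmbedding (ap g) :=
  (cont_ap g).measurableEmbedding (Function.LeftInverse.injective (ap_inv_ap g))

lemma ap_apply (g : SL2) (v : Fin 2 → ℝ) (i : Fin 2) :
    ap g v i = g.1 i 0 * v 0 + g.1 i 1 * v 1 := by
  fin_cases i
  · exact ap_zero g v
  · exact ap_one' g v

lemma solv_of_bounded (Γ : Subgroup SL2) (R : ℝ) (hR : ∀ g ∈ Γ, ∀ i j, |g.1 i j| ≤ R) :
    Group.IsSolvable Γ := by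
  have hR0 : 0 ≤ R := (abs_nonneg _).trans (hR 1 Γ.one_mem 0 0)
  let A : Set (Fin 2 → ℝ) := {v | ∀ g ∈ Γ, ∀ i, |ap g v i| ≤ 1}
  have hAc : IsClosed A := by
    have : A = ⋂ g ∈ Γ, ⋂ i, {v | |ap g v i| ≤ 1} := by ext v; simp [A]
    rw [this]
    refine isClosed_biInter fun g _ => isClosed_iInter fun i => ?_
    exact isClosed_le (continuous_abs.comp ((continuous_apply i).comp (cont_ap g))) continuous_const
  have hA1 : ∀ v ∈ A, ∀ i, |v i| ≤ 1 := by
    intro v hv i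
    have := hv 1 Γ.one_mem i
    rwa [ap_id] at this
  have hAb : A ⊆ Metric.closedBall 0 1 := by
    intro v hv
    rw [mem_closedBall_zero_iff, pi_norm_le_iff_of_nonneg zero_le_one]
    exact hA1 v hv
  have hAf : volume A < ⊤ := (measure_mono hAb).trans_lt measure_closedBall_lt_top
  have hAi : ∀ g ∈ Γ, ap g ⁻¹' A = A := by
    intro g hg
    ext v
    constructor
    · intro hv k hk i
      have := hv (k * g⁻¹) (Γ.mul_mem hk (Γ.inv_mem hg)) i
      rwa [ap_mul, ap_inv_ap] at this
    · intro hv k hk i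
      have := hv (k * g) (Γ.mul_mem hk hg) i
      rwa [ap_mul] at this
  have hIntg : ∀ i j, IntegrableOn (fun v : Fin 2 → ℝ => v i * v j) A volume := by
    intro i j
    refine Measure.integrableOn_of_bounded (M := 1) hAf.ne (by fun_prop) ?_
    refine (ae_restrict_iff' hAc.measurableSet).2 (Eventually.of_forall fun v hv => ?_)
    rw [norm_mul]
    exact mul_le_one₀ (hA1 v hv i) (norm_nonneg _) (hA1 v hv j)
  let M : Matrix (Fin 2) (Fin 2) ℝ := Matrix.of fun i j => ∫ v in A, v i * v j
  have hMpos : 0 < M 0 0 := by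
    change 0 < ∫ v in A, v 0 * v 0
    rw [setIntegral_pos_iff_support_of_nonneg_ae (Eventually.of_forall fun v => mul_self_nonneg _)
      (hIntg 0 0)]
    let δ : ℝ := 1 / (2 * R + 1)
    have hδ : 0 < δ := by positivity
    have hsub : Metric.ball 0 δ ∩ {v : Fin 2 → ℝ | v 0 ≠ 0} ⊆
        Function.support (fun v : Fin 2 → ℝ => v 0 * v 0) ∩ A := by
      rintro v ⟨hv, hv0⟩
      refine ⟨by simpa using hv0, fun g hg i => ?_⟩
      rw [mem_ball_zero_iff, pi_norm_lt_iff hδ] at hv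
      rw [ap_apply]
      have h0 : |v 0| ≤ δ := (hv 0).le
      have h1 : |v 1| ≤ δ := (hv 1).le
      calc _ ≤ |g.1 i 0| * |v 0| + |g.1 i 1| * |v 1| := by
            rw [← abs_mul, ← abs_mul]; exact abs_add_le _ _
        _ ≤ R * δ + R * δ := by
            gcongr <;> apply hR g hg
        _ ≤ 1 := by
            simp only [δ]; rw [← mul_add, ← two_mul]
            rw [show R * (2 * (1 / (2 * R + 1))) = 2 * R / (2 * R + 1) by ring]
            rw [div_le_one (by positivity)]; linarith
    refine lt_of_lt_of_le ?_ (measure_mono hsub)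
    have ho : IsOpen (Metric.ball 0 δ ∩ {v : Fin 2 → ℝ | v 0 ≠ 0}) :=
      Metric.isOpen_ball.inter (isOpen_ne_fun (continuous_apply 0) continuous_const)
    refine ho.measure_pos volume ⟨fun _ => δ / 2, ?_, ?_⟩
    · rw [mem_ball_zero_iff, pi_norm_lt_iff hδ]
      intro i
      rw [Real.norm_eq_abs, abs_of_pos (by positivity)]; linarith
    · change δ / 2 ≠ 0
      positivity
  have hM0 : M ≠ 0 := by
    intro h
    rw [h] at hMpos
    simp at hMpos
  refine solv_of_form Γ M ?_ hM0 fun g hg => ⟨1, ?_⟩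
  · change ∫ v in A, v 0 * v 1 = ∫ v in A, v 1 * v 0
    simp only [mul_comm]
  · rw [one_smul]
    have inv : ∀ i j, ∫ v in A, ap g v i * ap g v j = ∫ v in A, v i * v j := by
      intro i j
      have := (mp_ap g).setIntegral_preimage_emb (emb_ap g) (fun v => v i * v j) A
      rwa [hAi g hg] at this
    ext i j
    have e := inv i j
    change _ = ∫ v in A, v i * v j
    rw [← e]
    have ex : ∀ v, ap g v i * ap g v j = g.1 i 0 * g.1 j 0 * (v 0 * v 0) +
        g.1 i 0 * g.1 j 1 * (v 0 * v 1) + g.1 i 1 * g.1 j 0 * (v 1 * v 0) +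
        g.1 i 1 * g.1 j 1 * (v 1 * v 1) := by
      intro v; rw [ap_apply, ap_apply]; ring
    simp only [ex]
    rw [integral_add, integral_add, integral_add, integral_const_mul, integral_const_mul,
      integral_const_mul, integral_const_mul]
    · simp only [Matrix.mul_apply, Fin.sum_univ_two, Matrix.transpose_apply]
      simp only [M, Matrix.of_apply]
      ring
    · exact (hIntg 0 0).const_mul _
    · exact (hIntg 0 1).const_mul _
    · exact ((hIntg 0 0).const_mul _).add ((hIntg 0 1).const_mul _)
    · exact (hIntg 1 0).const_mul _
    · exact (((hIntg 0 0).const_mul _).add ((hIntg 0 1).const_mul _)).add ((hIntg 1 0).const_mul _)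
    · exact (hIntg 1 1).const_mul _

lemma entry_le_NN (g : SL2) (i j : Fin 2) : |g.1 i j| ≤ NN g := by
  apply Real.le_sqrt_of_sq_le
  rw [sq_abs]
  fin_cases i <;> fin_cases j <;> simp <;> nlinarith [sq_nonneg (g.1 0 0), sq_nonneg (g.1 0 1),
    sq_nonneg (g.1 1 0), sq_nonneg (g.1 1 1)]

lemma sph_sq (v : Sph) : v.1 0 ^ 2 + v.1 1 ^ 2 = 1 := by
  rw [← enorm2_sq, v.2, one_pow]

lemma dt_abs_le (u v : Sph) : |dt u.1 v.1| ≤ 1 := by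
  apply abs_le_of_sq_le_sq _ zero_le_one
  have h1 := sph_sq u
  have h2 := sph_sq v
  unfold dt
  have : (u.1 0 ^ 2 + u.1 1 ^ 2) * (v.1 0 ^ 2 + v.1 1 ^ 2) = 1 := by rw [h1, h2, one_mul]
  nlinarith [sq_nonneg (u.1 0 * v.1 0 + u.1 1 * v.1 1)]

lemma parallel {u x : Sph} (h : dt u.1 x.1 = 0) : ∃ c : ℝ, x.1 = c • u.1 := by
  have h1 := sph_sq u
  unfold dt at h
  refine ⟨u.1 0 * x.1 0 + u.1 1 * x.1 1, ?_⟩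
  ext i
  fin_cases i
  · simp
    linear_combination (-x.1 0) * h1 - u.1 1 * h
  · simp
    linear_combination (-x.1 1) * h1 + u.1 0 * h

lemma form_rank (g : SL2) (u w : Fin 2 → ℝ) :
    g.1 * Matrix.vecMulVec u w * g.1.transpose = Matrix.vecMulVec (ap g u) (ap g w) := by
  rw [Matrix.mul_vecMulVec, Matrix.vecMulVec_mul, Matrix.vecMul_transpose]
  rfl

lemma dt_triangle (u v w : Sph) : |dt u.1 v.1| ≤ |dt u.1 w.1| + |dt v.1 w.1| := by
  have h : ∀ u : Sph, |u.1 0 * w.1 0 + u.1 1 * w.1 1| ≤ 1 := by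
    intro u
    apply abs_le_of_sq_le_sq _ zero_le_one
    have : (u.1 0 ^ 2 + u.1 1 ^ 2) * (w.1 0 ^ 2 + w.1 1 ^ 2) = 1 := by
      rw [sph_sq, sph_sq, one_mul]
    nlinarith [sq_nonneg (u.1 0 * w.1 1 - u.1 1 * w.1 0)]
  have e : dt u.1 v.1 = dt u.1 w.1 * (v.1 0 * w.1 0 + v.1 1 * w.1 1) -
      dt v.1 w.1 * (u.1 0 * w.1 0 + u.1 1 * w.1 1) := by
    unfold dt
    linear_combination (-(u.1 0 * v.1 1 - u.1 1 * v.1 0)) * sph_sq w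
  rw [e]
  refine (abs_sub _ _).trans ?_
  rw [abs_mul, abs_mul]
  have := h u
  have := h v
  gcongr
  · exact mul_le_of_le_one_right (abs_nonneg _) (h v)
  · exact mul_le_of_le_one_right (abs_nonneg _) (h u)

lemma solv_of_finite (Γ : Subgroup SL2) (F : Set Sph) (hF : F.Finite) (hne : F.Nonempty)
    (hinv : ∀ g ∈ Γ, ∀ x ∈ F, sact g x ∈ F) : Group.IsSolvable Γ := by
  obtain ⟨u, hu⟩ := hne
  have apc : ∀ (g : SL2) (x y : Sph), dt y.1 (sact g x).1 = 0 → ∃ c : ℝ, ap g x.1 = c • y.1 := by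
    intro g x y h
    obtain ⟨c, hc⟩ := parallel h
    refine ⟨enorm2 (ap g x.1) * c, ?_⟩
    conv_lhs => rw [ap_eq_sact, hc, smul_smul]
  by_cases h1 : ∀ x ∈ F, dt u.1 x.1 = 0
  · refine solv_of_form Γ (Matrix.vecMulVec u.1 u.1) ?_ ?_ fun g hg => ?_
    · simp [Matrix.vecMulVec_apply, mul_comm]
    · intro h
      have h0 := congrFun (congrFun h 0) 0
      have h1 := congrFun (congrFun h 1) 1
      simp [Matrix.vecMulVec_apply] at h0 h1
      have := sph_sq u
      rw [h0, h1] at this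
      norm_num at this
    · obtain ⟨c, hc⟩ := apc g u u (h1 _ (hinv g hg u hu))
      refine ⟨c * c, ?_⟩
      rw [form_rank, hc]
      ext i j
      simp [Matrix.vecMulVec_apply]; ring
  push Not at h1
  obtain ⟨w, hw, huw⟩ := h1
  by_cases h2 : ∀ x ∈ F, dt u.1 x.1 = 0 ∨ dt w.1 x.1 = 0
  · refine solv_of_form Γ (Matrix.vecMulVec u.1 w.1 + Matrix.vecMulVec w.1 u.1) ?_ ?_ fun g hg => ?_
    · simp [Matrix.vecMulVec_apply]; ring
    · intro h
      have h0 := congrFun (congrFun h 0) 0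
      have h1 := congrFun (congrFun h 1) 1
      have h2 := congrFun (congrFun h 0) 1
      simp [Matrix.vecMulVec_apply] at h0 h1 h2
      apply huw
      unfold dt
      have : (u.1 0 * w.1 1 - u.1 1 * w.1 0) ^ 2 = 0 := by
        linear_combination (u.1 0 * w.1 1 + w.1 0 * u.1 1) * h2 - 2 * (u.1 1 * w.1 1) * h0
      exact pow_eq_zero_iff (two_ne_zero) |>.1 this
    · have hd := dt_ap g u.1 w.1
      rw [Matrix.mul_add, Matrix.add_mul, form_rank, form_rank]
      rcases h2 _ (hinv g hg u hu) with a | a <;> rcases h2 _ (hinv g hg w hw) with b | b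
      · obtain ⟨c, hc⟩ := apc g u u a
        obtain ⟨d, hd'⟩ := apc g w u b
        exfalso; apply huw; rw [← hd, hc, hd']; simp [dt]; ring
      · obtain ⟨c, hc⟩ := apc g u u a
        obtain ⟨d, hd'⟩ := apc g w w b
        refine ⟨c * d, ?_⟩
        rw [hc, hd']
        ext i j
        simp [Matrix.vecMulVec_apply]; ring
      · obtain ⟨c, hc⟩ := apc g u w a
        obtain ⟨d, hd'⟩ := apc g w u b
        refine ⟨c * d, ?_⟩
        rw [hc, hd']
        ext i j
        simp [Matrix.vecMulVec_apply]; ring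
      · obtain ⟨c, hc⟩ := apc g u w a
        obtain ⟨d, hd'⟩ := apc g w w b
        exfalso; apply huw; rw [← hd, hc, hd']; simp [dt]; ring
  push Not at h2
  obtain ⟨z, hz, huz, hwz⟩ := h2
  have hm : ∃ m > 0, ∀ x ∈ F, ∀ y ∈ F, dt x.1 y.1 ≠ 0 → m ≤ |dt x.1 y.1| := by
    let D : Set ℝ := (fun p : Sph × Sph => |dt p.1.1 p.2.1|) '' ((F ×ˢ F) ∩ {p | dt p.1.1 p.2.1 ≠ 0})
    have hD : D.Finite := ((hF.prod hF).subset Set.inter_subset_left).image _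
    have hDn : D.Nonempty := ⟨_, ⟨(u, w), ⟨⟨hu, hw⟩, huw⟩, rfl⟩⟩
    obtain ⟨m, hm, hmin⟩ := Set.exists_min_image D id hD hDn
    refine ⟨m, ?_, fun x hx y hy hxy => hmin _ ⟨(x, y), ⟨⟨hx, hy⟩, hxy⟩, rfl⟩⟩
    obtain ⟨p, ⟨_, hp⟩, rfl⟩ := hm
    exact abs_pos.2 hp
  obtain ⟨m, hm0, hm⟩ := hm
  have pair : ∀ g ∈ Γ, ∀ x ∈ F, ∀ y ∈ F, dt x.1 y.1 ≠ 0 →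
      m ≤ enorm2 (ap g x.1) * enorm2 (ap g y.1) ∧
      enorm2 (ap g x.1) * enorm2 (ap g y.1) * m ≤ 1 := by
    intro g hg x hx y hy hxy
    have e : dt x.1 y.1 = enorm2 (ap g x.1) * enorm2 (ap g y.1) *
        dt (sact g x).1 (sact g y).1 := by
      rw [← dt_ap g x.1 y.1]
      conv_lhs => rw [ap_eq_sact g x, ap_eq_sact g y]
      simp [dt]; ring
    have hne : dt (sact g x).1 (sact g y).1 ≠ 0 := by
      intro h; rw [h, mul_zero] at e; exact hxy e
    have p1 := enorm2_ap_pos g x.2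
    have p2 := enorm2_ap_pos g y.2
    have e' : |dt x.1 y.1| = enorm2 (ap g x.1) * enorm2 (ap g y.1) *
        |dt (sact g x).1 (sact g y).1| := by
      rw [e, abs_mul, abs_of_pos (mul_pos p1 p2)]
    have b1 := hm x hx y hy hxy
    have b2 := hm _ (hinv g hg x hx) _ (hinv g hg y hy) hne
    have b3 := dt_abs_le x y
    have b4 := dt_abs_le (sact g x) (sact g y)
    have p3 := mul_pos p1 p2
    constructor <;> nlinarith
  have vb : ∀ g ∈ Γ, ∀ x ∈ F, ∀ y ∈ F, ∀ z ∈ F, dt x.1 y.1 ≠ 0 → dt x.1 z.1 ≠ 0 → dt y.1 z.1 ≠ 0 →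
      enorm2 (ap g x.1) ≤ 1 + 1 / m ^ 3 := by
    intro g hg x hx y hy z hz hxy hxz hyz
    have c1 := pair g hg x hx y hy hxy
    have c2 := pair g hg x hx z hz hxz
    have c3 := pair g hg y hy z hz hyz
    have p1 := enorm2_ap_pos g x.2
    have p2 := enorm2_ap_pos g y.2
    have p3 := enorm2_ap_pos g z.2
    set a := enorm2 (ap g x.1)
    set b := enorm2 (ap g y.1)
    set c := enorm2 (ap g z.1)
    have : a ^ 2 * m ^ 3 ≤ 1 := by
      have q : (a * b * m) * (a * c * m) ≤ 1 := mul_le_one₀ c1.2 (by positivity) c2.2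
      calc a ^ 2 * m ^ 3 = a ^ 2 * m ^ 2 * m := by ring
        _ ≤ a ^ 2 * m ^ 2 * (b * c) := by gcongr; exact c3.1
        _ = (a * b * m) * (a * c * m) := by ring
        _ ≤ 1 := q
    have : a ^ 2 ≤ 1 / m ^ 3 := by rw [le_div_iff₀ (by positivity)]; exact this
    nlinarith [sq_nonneg (a - 1)]
  apply solv_of_bounded Γ (4 * (1 + 1 / m ^ 3) / m)
  intro g hg i j
  refine (entry_le_NN g i j).trans ?_
  obtain ⟨d, hd1, hd⟩ := exists_dir g
  have sw : ∀ a b : Sph, dt a.1 b.1 ≠ 0 → dt b.1 a.1 ≠ 0 := by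
    intro a b h h'
    apply h
    unfold dt at *
    linarith
  have v1 := vb g hg u hu w hw z hz huw huz hwz
  have v2 := vb g hg w hw u hu z hz (sw _ _ huw) hwz huz
  have t := dt_triangle u w ⟨d, hd1⟩
  have l := hm u hu w hw huw
  have d1 := hd u.1
  have d2 := hd w.1
  have hN := NN_pos g
  rw [le_div_iff₀ hm0]
  simp only at t
  have : NN g * m ≤ NN g * (|dt u.1 d| + |dt w.1 d|) := by gcongr; linarith
  linarith

instance instSL2T2 : T2Space SL2 := inferInstanceAs (T2Space (Subtype _))

abbrev HH := Lp ℝ 2 (volume : Measure (Fin 2 → ℝ))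

def rep (g : SL2) (f : HH) : HH := Lp.compMeasurePreserving (ap g) (mp_ap g) f

lemma rep_add (g : SL2) (f k : HH) : rep g (f + k) = rep g f + rep g k := map_add _ _ _

lemma rep_smul (g : SL2) (c : ℝ) (f : HH) : rep g (c • f) = c • rep g f :=
  (Lp.compMeasurePreservingₗ ℝ (ap g) (mp_ap g)).map_smul c f

lemma norm_rep (g : SL2) (f : HH) : ‖rep g f‖ = ‖f‖ := Lp.norm_compMeasurePreserving _ _

lemma rep_coe (g : SL2) (f : HH) : rep g f =ᵐ[volume] f ∘ ap g :=
  Lp.coeFn_compMeasurePreserving _ _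

lemma rep_mul (g h : SL2) (f : HH) : rep (g * h) f = rep h (rep g f) := by
  apply Lp.ext
  refine (rep_coe _ _).trans ?_
  refine EventuallyEq.trans ?_ (rep_coe _ _).symm
  have := (mp_ap h).quasiMeasurePreserving.ae_eq_comp (rep_coe g f)
  refine EventuallyEq.trans ?_ this.symm
  refine Eventually.of_forall fun v => ?_
  simp [ap_mul]

lemma continuous_rep (f : HH) : Continuous fun g => rep g f := by
  have hc : Continuous fun g : SL2 => (⟨ap g, cont_ap g⟩ : C(Fin 2 → ℝ, Fin 2 → ℝ)) :=
    ContinuousMap.continuous_of_continuous_uncurry _ continuous_ap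
  exact Continuous.compMeasurePreservingLp (continuous_const (y := f)) hc (fun g => mp_ap g) (by simp)

lemma integrable_rep (ρ : Measure SL2) [IsProbabilityMeasure ρ] (f : HH) :
    Integrable (fun g => rep g f) ρ :=
  Integrable.of_bound (continuous_rep f).aestronglyMeasurable ‖f‖
    (Eventually.of_forall fun g => (norm_rep g f).le)

def TT (ρ : Measure SL2) [IsProbabilityMeasure ρ] : HH →L[ℝ] HH :=
  LinearMap.mkContinuous
    { toFun := fun f => ∫ g, rep g f ∂ρ
      map_add' := fun f k => by
        simp only [rep_add]
        exact integral_add (integrable_rep ρ f) (integrable_rep ρ k)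
      map_smul' := fun c f => by
        simp only [rep_smul, integral_smul, RingHom.id_apply] } 1 (fun f => by
        rw [one_mul]
        refine (norm_integral_le_of_norm_le_const (C := ‖f‖)
          (Eventually.of_forall fun g => (norm_rep g f).le)).trans ?_
        simp)

lemma TT_apply (ρ : Measure SL2) [IsProbabilityMeasure ρ] (f : HH) :
    TT ρ f = ∫ g, rep g f ∂ρ := rfl

lemma TT_norm (ρ : Measure SL2) [IsProbabilityMeasure ρ] : ‖TT ρ‖ ≤ 1 :=
  LinearMap.mkContinuous_norm_le _ zero_le_one _

def repL (g : SL2) : HH →L[ℝ] HH :=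
  LinearMap.mkContinuous
    { toFun := rep g, map_add' := rep_add g, map_smul' := rep_smul g } 1
    (fun f => by rw [one_mul]; exact (norm_rep g f).le)

lemma TT_cv (μ : Measure SL2) [IsProbabilityMeasure μ] (n : ℕ) (f : HH) :
    (TT μ)^[n] f = ∫ g, rep g f ∂(cv μ n) := by
  induction n with
  | zero =>
    simp only [Function.iterate_zero, id, cv]
    rw [integral_dirac]
    apply Lp.ext
    refine EventuallyEq.trans ?_ (rep_coe _ _).symm
    exact Eventually.of_forall fun v => by simp [ap_id]
  | succ n ih =>
    rw [Function.iterate_succ_apply', ih, TT_apply]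
    change _ = ∫ g, rep g f ∂(Measure.mconv (cv μ n) μ)
    rw [Measure.mconv, integral_map (by fun_prop) (continuous_rep f).aestronglyMeasurable,
      integral_prod_symm]
    · refine integral_congr_ae (Eventually.of_forall fun h => ?_)
      simp only [rep_mul]
      exact ((repL h).integral_comp_comm (integrable_rep (cv μ n) f)).symm
    · refine Integrable.of_bound (Continuous.aestronglyMeasurable ?_) ‖f‖
        (Eventually.of_forall fun g => (norm_rep _ f).le)
      exact (continuous_rep f).comp continuous_mul

lemma closed_of_ae (μ : Measure SL2) (H : Set SL2) (hH : IsClosed H) (h : ∀ᵐ g ∂μ, g ∈ H) :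
    measSupp μ ⊆ H := by
  intro g hg
  by_contra hn
  have := hg Hᶜ hH.isOpen_compl hn
  exact this.ne' h

lemma fixed_of_TT (μ : Measure SL2) [IsProbabilityMeasure μ] (f : HH) (hf : TT μ f = f) :
    ∀ g ∈ Subgroup.closure (measSupp μ), rep g f = f := by
  have h1 : ∫ g, (inner ℝ f f - inner ℝ f (rep g f)) ∂μ = 0 := by
    rw [integral_sub (integrable_const _) ((integrable_rep μ f).const_inner f),
      integral_inner (integrable_rep μ f), ← TT_apply, hf]
    simp
  have h0 : ∀ g, 0 ≤ inner ℝ f f - inner ℝ f (rep g f) := by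
    intro g
    have := real_inner_le_norm f (rep g f)
    rw [norm_rep] at this
    rw [real_inner_self_eq_norm_mul_norm]
    linarith
  have h2 := (integral_eq_zero_iff_of_nonneg (μ := μ) (f := fun g => inner ℝ f f - inner ℝ f (rep g f))
    h0 ((integrable_const _).sub ((integrable_rep μ f).const_inner f))).1 h1
  have h3 : ∀ᵐ g ∂μ, g ∈ {g | rep g f = f} := by
    filter_upwards [h2] with g hg
    have hg' : inner ℝ f f - inner ℝ f (rep g f) = 0 := hg
    have : ‖rep g f - f‖ ^ 2 = 0 := by
      rw [norm_sub_sq_real, norm_rep, real_inner_comm, ← real_inner_self_eq_norm_sq]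
      linarith
    exact sub_eq_zero.1 (norm_eq_zero.1 (by simpa using this))
  have h4 := closed_of_ae μ _ (isClosed_eq (continuous_rep f) continuous_const) h3
  intro g hg
  induction hg using Subgroup.closure_induction with
  | mem x hx => exact h4 hx
  | one =>
    apply Lp.ext
    refine (rep_coe _ _).trans ?_
    exact Eventually.of_forall fun v => by simp [ap_id]
  | mul x y _ _ hx hy => rw [rep_mul, hx, hy]
  | inv x _ hx =>
    conv_lhs => rw [← hx]
    rw [← rep_mul, mul_inv_cancel]
    apply Lp.ext
    refine (rep_coe _ _).trans ?_
    exact Eventually.of_forall fun v => by simp [ap_id]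

lemma vol_pre (M : Matrix (Fin 2) (Fin 2) ℝ) (hM : M.det ≠ 0) (R : ℝ) (hR : 0 ≤ R) :
    volume ((fun v => M.mulVec v) ⁻¹' Metric.closedBall (0 : Fin 2 → ℝ) R) =
      ENNReal.ofReal (4 * R ^ 2 / |M.det|) := by
  have h := Real.map_matrix_volume_pi_eq_smul_volume_pi hM
  have h2 : Measure.map (Matrix.toLin' M) volume (Metric.closedBall (0 : Fin 2 → ℝ) R) =
    volume ((Matrix.toLin' M) ⁻¹' Metric.closedBall (0 : Fin 2 → ℝ) R) :=
    Measure.map_apply (LinearMap.continuous_of_finiteDimensional _).measurable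
      measurableSet_closedBall
  rw [h, Measure.smul_apply, Real.volume_pi_closedBall _ hR, smul_eq_mul,
    ← ENNReal.ofReal_mul (abs_nonneg _)] at h2
  refine Eq.trans h2.symm ?_
  congr 1
  rw [abs_inv, Fintype.card_fin]
  ring

lemma mem_cb (v : Fin 2 → ℝ) (R : ℝ) (hR : 0 ≤ R) :
    v ∈ Metric.closedBall (0 : Fin 2 → ℝ) R ↔ |v 0| ≤ R ∧ |v 1| ≤ R := by
  rw [mem_closedBall_zero_iff, pi_norm_le_iff_of_nonneg hR, Fin.forall_fin_two]
  simp only [Real.norm_eq_abs]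

lemma vol_bound (g : SL2) (i j : Fin 2) (h : g.1 i j ≠ 0) (R : ℝ) (hR : 0 ≤ R) :
    volume (Metric.closedBall (0 : Fin 2 → ℝ) R ∩ ap g ⁻¹' Metric.closedBall (0 : Fin 2 → ℝ) R) ≤
      ENNReal.ofReal (4 * R ^ 2 / |g.1 i j|) := by
  have key : ∀ v, v ∈ Metric.closedBall (0 : Fin 2 → ℝ) R →
      ap g v ∈ Metric.closedBall (0 : Fin 2 → ℝ) R →
      (∀ k, |v k| ≤ R) ∧ (|g.1 i 0 * v 0 + g.1 i 1 * v 1| ≤ R) := by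
    intro v h1 h2
    rw [mem_cb _ _ hR] at h1 h2
    refine ⟨Fin.forall_fin_two.2 h1, ?_⟩
    rw [ap_zero, ap_one'] at h2
    fin_cases i
    · exact h2.1
    · exact h2.2
  fin_cases j
  · have hd : Matrix.det !![g.1 i 0, g.1 i 1; 0, 1] = g.1 i 0 := by simp [Matrix.det_fin_two]
    have := vol_pre !![g.1 i 0, g.1 i 1; 0, 1] (by rw [hd]; exact h) R hR
    rw [hd] at this
    refine (measure_mono ?_).trans this.le
    intro v hv
    have := key v hv.1 hv.2
    rw [Set.mem_preimage, mem_cb _ _ hR]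
    simpa [Matrix.mulVec, dotProduct] using ⟨this.2, this.1 1⟩
  · have hd : |Matrix.det !![g.1 i 0, g.1 i 1; 1, 0]| = |g.1 i 1| := by simp [Matrix.det_fin_two]
    have := vol_pre !![g.1 i 0, g.1 i 1; 1, 0] (by rw [← abs_pos, hd]; exact abs_pos.2 h) R hR
    rw [hd] at this
    refine (measure_mono ?_).trans this.le
    intro v hv
    have := key v hv.1 hv.2
    rw [Set.mem_preimage, mem_cb _ _ hR]
    simpa [Matrix.mulVec, dotProduct] using ⟨this.2, this.1 0⟩

lemma bounded_of_fixed (Γ : Subgroup SL2) (f : HH) (hf : f ≠ 0) (hΓ : ∀ g ∈ Γ, rep g f = f) :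
    ∃ R, ∀ g ∈ Γ, ∀ i j, |g.1 i j| ≤ R := by
  obtain ⟨n, hn⟩ : ∃ n : ℕ, volume {v | ((n : NNReal) + 1)⁻¹ ≤ ‖f v‖₊} ≠ 0 := by
    by_contra hcon
    push Not at hcon
    apply hf
    apply Lp.ext
    refine EventuallyEq.trans ?_ (Lp.coeFn_zero _ _ _).symm
    have := ae_all_iff.2 (fun n : ℕ => show ∀ᵐ v, ¬ (((n : NNReal) + 1)⁻¹ ≤ ‖f v‖₊) from by
      rw [ae_iff]; simpa using hcon n)
    filter_upwards [this] with v hv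
    by_contra h0
    have h0' : 0 < ‖f v‖₊ := by simpa [pos_iff_ne_zero] using h0
    obtain ⟨n, hn⟩ := exists_nat_gt (‖f v‖₊)⁻¹
    apply hv n
    rw [inv_le_comm₀ (by positivity) h0']
    exact hn.le.trans (by simp)
  set E := {v | ((n : NNReal) + 1)⁻¹ ≤ ‖f v‖₊} with hE
  have hEfin : volume E < ⊤ :=
    (Lp.memLp f).meas_ge_lt_top (by simp) (by simp) (ε := ((n : NNReal) + 1)⁻¹) (by positivity)
  have hEm : MeasurableSet E :=
    measurableSet_le measurable_const (Lp.stronglyMeasurable f).measurable.nnnorm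
  have hEinv : ∀ g ∈ Γ, ap g ⁻¹' E =ᵐ[volume] E := by
    intro g hg
    have := rep_coe g f
    rw [hΓ g hg] at this
    filter_upwards [this] with v hv
    have hv' : f v = f (ap g v) := hv
    apply propext
    change ((n : NNReal) + 1)⁻¹ ≤ ‖f (ap g v)‖₊ ↔ ((n : NNReal) + 1)⁻¹ ≤ ‖f v‖₊
    rw [hv']
  obtain ⟨R, hR⟩ : ∃ R : ℕ, volume E < 2 * volume (E ∩ Metric.closedBall 0 (R : ℝ)) := by
    have hm : Monotone fun R : ℕ => E ∩ Metric.closedBall (0 : Fin 2 → ℝ) (R : ℝ) := by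
      intro a b hab
      exact Set.inter_subset_inter_right _ (Metric.closedBall_subset_closedBall (by exact_mod_cast hab))
    have ht := tendsto_measure_iUnion_atTop (μ := volume) hm
    rw [← Set.inter_iUnion, Metric.iUnion_closedBall_nat, Set.inter_univ] at ht
    have h2 : volume E / 2 < volume E := ENNReal.half_lt_self hn hEfin.ne
    obtain ⟨R, hR⟩ := (ht.eventually (lt_mem_nhds h2)).exists
    refine ⟨R, ?_⟩
    rw [mul_comm]
    exact (ENNReal.div_lt_iff (by simp) (by simp)).1 hR
  set B := Metric.closedBall (0 : Fin 2 → ℝ) (R : ℝ)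
  have hBm : MeasurableSet B := measurableSet_closedBall
  have hEB : MeasurableSet (E ∩ B) := hEm.inter hBm
  have hEBle : volume (E ∩ B) ≤ volume E := measure_mono Set.inter_subset_left
  have hEBfin : volume (E ∩ B) ≠ ⊤ := (hEBle.trans_lt hEfin).ne
  have hc : 0 < 2 * volume.real (E ∩ B) - volume.real E := by
    have := (ENNReal.toReal_lt_toReal hEfin.ne (ENNReal.mul_ne_top (by simp) hEBfin)).2 hR
    rw [ENNReal.toReal_mul] at this
    simp only [Measure.real]
    simpa using this
  set c := 2 * volume.real (E ∩ B) - volume.real E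
  refine ⟨4 * (R : ℝ) ^ 2 / c, fun g hg i j => ?_⟩
  by_cases h0 : g.1 i j = 0
  · rw [h0, abs_zero]; positivity
  have hpos : 0 < |g.1 i j| := abs_pos.2 h0
  have hb := vol_bound g i j h0 R (by positivity)
  have hpre : volume (ap g ⁻¹' (E ∩ B)) = volume (E ∩ B) :=
    (mp_ap g).measure_preimage hEB.nullMeasurableSet
  have hpreE : volume (E ∪ ap g ⁻¹' E) = volume E := by
    have := (EventuallyEq.refl (ae volume) E).union (hEinv g hg)
    rw [Set.union_self] at this
    exact measure_congr this
  have h1 := measure_union_add_inter (μ := volume) (E ∩ B)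
    (hEB.preimage (mp_ap g).measurable)
  have h2 : volume ((E ∩ B) ∪ ap g ⁻¹' (E ∩ B)) ≤ volume E := by
    rw [← hpreE]
    exact measure_mono (Set.union_subset_union Set.inter_subset_left
      (Set.preimage_mono Set.inter_subset_left))
  have h3 : volume ((E ∩ B) ∩ ap g ⁻¹' (E ∩ B)) ≤ ENNReal.ofReal (4 * (R : ℝ) ^ 2 / |g.1 i j|) :=
    (measure_mono (Set.inter_subset_inter Set.inter_subset_right
      (Set.preimage_mono Set.inter_subset_right))).trans hb
  have h4 : volume (E ∩ B) + volume (E ∩ B) ≤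
      volume E + ENNReal.ofReal (4 * (R : ℝ) ^ 2 / |g.1 i j|) := by
    rw [hpre] at h1
    rw [← h1]
    gcongr
  have h5 := ENNReal.toReal_mono (ENNReal.add_ne_top.2 ⟨hEfin.ne, ENNReal.ofReal_ne_top⟩) h4
  rw [ENNReal.toReal_add hEBfin hEBfin,
    ENNReal.toReal_add hEfin.ne ENNReal.ofReal_ne_top, ENNReal.toReal_ofReal (by positivity)] at h5
  have h6 : c ≤ 4 * (R : ℝ) ^ 2 / |g.1 i j| := by
    simp only [c, Measure.real]; linarith
  rw [le_div_iff₀ hpos] at h6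
  rw [le_div_iff₀ hc]
  linarith

def ub : HH := indicatorConstLp 2 (measurableSet_closedBall (x := (0 : Fin 2 → ℝ)) (ε := 1))
  (by rw [Real.volume_pi_closedBall _ zero_le_one]; simp) (1 : ℝ)

lemma ub_inner (g : SL2) : (NN g ^ 2)⁻¹ ≤ inner ℝ ub (rep g ub) := by
  have hfin : volume (Metric.closedBall (0 : Fin 2 → ℝ) 1) ≠ ⊤ := by
    rw [Real.volume_pi_closedBall _ zero_le_one]; simp
  unfold rep ub
  rw [Lp.indicatorConstLp_compMeasurePreserving,
    L2.real_inner_indicatorConstLp_one_indicatorConstLp_one (hμs := hfin)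
      (hμt := by rwa [(mp_ap g).measure_preimage measurableSet_closedBall.nullMeasurableSet])]
  have hN := NN_pos g
  have hN1 := one_le_NN g
  have : volume.real (Metric.closedBall (0 : Fin 2 → ℝ) (1 / (2 * NN g))) = (NN g ^ 2)⁻¹ := by
    rw [Measure.real, Real.volume_pi_closedBall _ (by positivity), ENNReal.toReal_ofReal (by positivity),
      Fintype.card_fin]
    field_simp
  rw [← this]
  refine measureReal_mono ?_ ((measure_mono Set.inter_subset_left).trans_lt hfin.lt_top).ne
  intro v hv
  have hs : 1 / (2 * NN g) ≤ 1 := by rw [div_le_one (by positivity)]; linarith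
  refine ⟨Metric.closedBall_subset_closedBall hs hv, ?_⟩
  rw [mem_cb _ _ (by positivity)] at hv
  rw [Set.mem_preimage, mem_cb _ _ zero_le_one]
  have h1 : enorm2 v ≤ 1 / NN g := by
    apply le_of_sq_le_sq' _ (by positivity)
    rw [enorm2_sq]
    have a := sq_le_sq' (by linarith [abs_nonneg (v 0)]) hv.1
    have b := sq_le_sq' (by linarith [abs_nonneg (v 1)]) hv.2
    rw [sq_abs] at a b
    have e : (1 / (2 * NN g)) ^ 2 = (1 / NN g) ^ 2 / 4 := by field_simp; norm_num
    rw [e] at a b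
    have := sq_nonneg (1 / NN g)
    linarith
  have h2 : enorm2 (ap g v) ≤ 1 := by
    refine (enorm2_ap_le g v).trans ?_
    calc NN g * enorm2 v ≤ NN g * (1 / NN g) := by gcongr
      _ = 1 := by field_simp
  have h3 : ap g v 0 ^ 2 + ap g v 1 ^ 2 ≤ 1 := by
    rw [← enorm2_sq]
    have := enorm2_nonneg (ap g v)
    nlinarith
  constructor
  · rw [abs_le_one_iff_mul_self_le_one]; nlinarith [sq_nonneg (ap g v 1)]
  · rw [abs_le_one_iff_mul_self_le_one]; nlinarith [sq_nonneg (ap g v 0)]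

lemma integrable_NNinv (ρ : Measure SL2) [IsProbabilityMeasure ρ] :
    Integrable (fun g => (NN g ^ 2)⁻¹) ρ := by
  refine Integrable.of_bound (Continuous.aestronglyMeasurable ?_) 1 (Eventually.of_forall fun g => ?_)
  · exact (continuous_NN.pow 2).inv₀ fun g => (pow_pos (NN_pos g) 2).ne'
  · have := one_le_NN g
    rw [Real.norm_of_nonneg (by positivity)]
    exact inv_le_one_of_one_le₀ (one_le_pow₀ this)

theorem NN_decay (μ : Measure SL2) [IsProbabilityMeasure μ] (hzd : ZariskiDense μ) (η : ℝ) (hη : 0 < η) :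
    ∃ n, ∫ g, (NN g ^ 2)⁻¹ ∂(cv μ n) < η := by
  by_contra hcon
  push Not at hcon
  have hfix : ∀ f : HH, TT μ f = f → f = 0 := by
    intro f hf
    by_contra h0
    obtain ⟨R, hR⟩ := bounded_of_fixed _ f h0 (fixed_of_TT μ f hf)
    exact hzd (solv_of_bounded _ R hR)
  have ht := ContinuousLinearMap.tendsto_birkhoffAverage_orthogonalProjection (TT μ) (TT_norm μ) ub
  have hz : (((TT μ).eqLocus (1 : HH →L[ℝ] HH)).orthogonalProjectionOnto ub : HH) = 0 :=
    hfix _ (Submodule.coe_mem (((TT μ).eqLocus (1 : HH →L[ℝ] HH)).orthogonalProjectionOnto ub))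
  rw [hz] at ht
  have ht2 := (Filter.Tendsto.inner (𝕜 := ℝ) (tendsto_const_nhds (x := ub)) ht)
  rw [inner_zero_right] at ht2
  obtain ⟨N, hN, hN1⟩ := ((ht2.eventually (gt_mem_nhds hη)).and (eventually_ge_atTop 1)).exists
  have hNpos : (0 : ℝ) < N := by exact_mod_cast hN1
  rw [birkhoffAverage, birkhoffSum, inner_smul_right, inner_sum] at hN
  have : ∀ n, η ≤ inner ℝ ub ((TT μ)^[n] ub) := by
    intro n
    rw [TT_cv, ← integral_inner (integrable_rep _ ub)]
    refine (hcon n).trans (integral_mono (integrable_NNinv _)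
      ((integrable_rep _ ub).const_inner ub) (ub_inner ·))
  have h2 : (N : ℝ) * η ≤ ∑ n ∈ Finset.range N, inner ℝ ub ((TT μ)^[n] ub) := by
    have := Finset.sum_le_sum (s := Finset.range N) (fun n _ => this n)
    simpa using this
  simp only [id] at hN
  have h3 : (N : ℝ)⁻¹ * (N * η) < η := lt_of_le_of_lt (by gcongr) hN
  rw [← mul_assoc, inv_mul_cancel₀ hNpos.ne', one_mul] at h3
  exact lt_irrefl _ h3

lemma exp_mom (μ : Measure SL2) [IsProbabilityMeasure μ] (hmom : HasExpMoment μ) :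
    ∃ ε > (0 : ℝ), ∀ n, Integrable (fun g => NN g ^ ε) (cv μ n) := by
  obtain ⟨ε, hε, h⟩ := hmom
  refine ⟨ε, hε, ?_⟩
  have hc : Continuous fun g : SL2 => NN g ^ ε :=
    continuous_NN.rpow_const fun g => Or.inl (NN_pos g).ne'
  have h1 : ∫⁻ g, ENNReal.ofReal (NN g ^ ε) ∂μ < ⊤ := by
    refine lt_of_le_of_lt (b := ∫⁻ g, ENNReal.ofReal (2 ^ ε) * ENNReal.ofReal (opNorm g ^ ε) ∂μ) ?_ ?_
    · refine lintegral_mono fun g => ?_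
      have ho : 0 ≤ opNorm g := norm_nonneg _
      rw [← ENNReal.ofReal_mul (by positivity), ← Real.mul_rpow (by norm_num) ho]
      exact ENNReal.ofReal_le_ofReal
        (Real.rpow_le_rpow (NN_pos g).le (NN_le_opNorm g) hε.le)
    · rw [lintegral_const_mul' _ _ ENNReal.ofReal_ne_top]
      exact ENNReal.mul_lt_top ENNReal.ofReal_lt_top h
  have key : ∀ n, ∫⁻ g, ENNReal.ofReal (NN g ^ ε) ∂(cv μ n) < ⊤ := by
    intro n
    induction n with
    | zero => simp [cv]
    | succ n ih =>
      rw [lint_cv_add μ n 1 _ hc.measurable.ennreal_ofReal, cv_one]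
      refine lt_of_le_of_lt (b := ∫⁻ h, (∫⁻ g, ENNReal.ofReal (NN g ^ ε) ∂(cv μ n)) *
        ENNReal.ofReal (NN h ^ ε) ∂μ) ?_ ?_
      · refine lintegral_mono fun h => ?_
        rw [← lintegral_mul_const' _ _ ENNReal.ofReal_ne_top]
        refine lintegral_mono fun g => ?_
        rw [← ENNReal.ofReal_mul (Real.rpow_nonneg (NN_pos g).le _),
          ← Real.mul_rpow (NN_pos g).le (NN_pos h).le]
        exact ENNReal.ofReal_le_ofReal
          (Real.rpow_le_rpow (NN_pos _).le (NN_mul_le g h) hε.le)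
      · rw [lintegral_const_mul' _ _ ih.ne]
        exact ENNReal.mul_lt_top ih h1
  intro n
  refine ⟨hc.aestronglyMeasurable, ?_⟩
  rw [hasFiniteIntegral_iff_ofReal (Eventually.of_forall fun g => Real.rpow_nonneg (NN_pos g).le _)]
  exact key n

lemma continuous_logNN : Continuous fun g => Real.log (NN g) :=
  continuous_NN.log fun g => (NN_pos g).ne'

lemma log_mom (μ : Measure SL2) [IsProbabilityMeasure μ] (hmom : HasExpMoment μ) (n : ℕ) :
    Integrable (fun g => Real.log (NN g)) (cv μ n) := by
  obtain ⟨ε, hε, h⟩ := exp_mom μ hmom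
  refine ((h n).div_const ε).mono' continuous_logNN.aestronglyMeasurable
    (Eventually.of_forall fun g => ?_)
  rw [Real.norm_of_nonneg (logNN_nonneg g)]
  exact Real.log_le_rpow_div (NN_pos g).le hε

lemma cont_sg_left (v : Sph) : Continuous fun g => sg g v :=
  continuous_sg.comp (continuous_id.prodMk continuous_const)
lemma cont_sg_right (g : SL2) : Continuous fun v => sg g v :=
  continuous_sg.comp (continuous_const.prodMk continuous_id)
lemma cont_sact_left (v : Sph) : Continuous fun g => sact g v :=
  Continuous.comp (g := fun p : SL2 × Sph => sact p.1 p.2) (f := fun g : SL2 => (g, v))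
    continuous_sact (by fun_prop)
lemma cont_sact_right (g : SL2) : Continuous fun v => sact g v :=
  Continuous.comp (g := fun p : SL2 × Sph => sact p.1 p.2) (f := fun v : Sph => (g, v))
    continuous_sact (by fun_prop)

lemma int_cv_add (μ : Measure SL2) [IsProbabilityMeasure μ] (m n : ℕ) (f : SL2 → ℝ) (hf : Integrable f (cv μ (m + n))) :
    ∫ g, f g ∂(cv μ (m + n)) = ∫ h, ∫ g, f (g * h) ∂(cv μ m) ∂(cv μ n) := by
  rw [cv_add] at hf ⊢
  rw [Measure.mconv] at hf ⊢
  rw [integral_map (by fun_prop) hf.1]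
  exact integral_prod_symm _ (hf.comp_measurable measurable_mul)

def psi (μ : Measure SL2) (n : ℕ) (v : Sph) : ℝ := ∫ g, sg g v ∂(cv μ n)

def mav (μ : Measure SL2) (n : ℕ) (f : Sph → ℝ) (v : Sph) : ℝ := ∫ g, f (sact g v) ∂(cv μ n)

lemma integrable_sg (μ : Measure SL2) [IsProbabilityMeasure μ] (hmom : HasExpMoment μ) (n : ℕ) (v : Sph) : Integrable (fun g => sg g v) (cv μ n) :=
  (log_mom μ hmom n).mono' (cont_sg_left v).aestronglyMeasurable
    (Eventually.of_forall fun g => abs_sg_le g v)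

lemma continuous_psi (μ : Measure SL2) [IsProbabilityMeasure μ] (hmom : HasExpMoment μ) (n : ℕ) : Continuous (psi μ n) :=
  continuous_of_dominated (fun v => (cont_sg_left v).aestronglyMeasurable)
    (fun v => Eventually.of_forall fun g => abs_sg_le g v) (log_mom μ hmom n)
    (Eventually.of_forall fun g => cont_sg_right g)

lemma bdd_of_cont {f : Sph → ℝ} (hf : Continuous f) : ∃ C, ∀ v, |f v| ≤ C := by
  obtain ⟨C, hC⟩ := isCompact_univ.exists_bound_of_continuousOn hf.continuousOn
  exact ⟨C, fun v => hC v trivial⟩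

lemma integrable_mav (μ : Measure SL2) [IsProbabilityMeasure μ] (n : ℕ) {f : Sph → ℝ} (hf : Continuous f) (v : Sph) :
    Integrable (fun g => f (sact g v)) (cv μ n) := by
  obtain ⟨C, hC⟩ := bdd_of_cont hf
  exact Integrable.of_bound (hf.comp (cont_sact_left v)).aestronglyMeasurable C
    (Eventually.of_forall fun g => hC _)

lemma continuous_mav (μ : Measure SL2) [IsProbabilityMeasure μ] (n : ℕ) {f : Sph → ℝ} (hf : Continuous f) : Continuous (mav μ n f) := by
  obtain ⟨C, hC⟩ := bdd_of_cont hf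
  exact continuous_of_dominated (fun v => (hf.comp (cont_sact_left v)).aestronglyMeasurable)
    (fun v => Eventually.of_forall fun g => hC _) (integrable_const C)
    (Eventually.of_forall fun g => hf.comp (cont_sact_right g))

lemma mav_add (μ : Measure SL2) [IsProbabilityMeasure μ] (m n : ℕ) {f : Sph → ℝ} (hf : Continuous f) (v : Sph) :
    mav μ (m + n) f v = mav μ n (mav μ m f) v := by
  unfold mav
  rw [int_cv_add μ m n _ (integrable_mav μ (m + n) hf v)]
  simp only [sact_mul]

lemma psi_add (μ : Measure SL2) [IsProbabilityMeasure μ] (hmom : HasExpMoment μ) (m n : ℕ) (v : Sph) :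
    psi μ (m + n) v = mav μ n (psi μ m) v + psi μ n v := by
  unfold psi mav
  rw [int_cv_add μ m n _ (integrable_sg μ hmom (m + n) v), ← integral_add]
  · refine integral_congr_ae (Eventually.of_forall fun h => ?_)
    simp only [sg_mul]
    rw [integral_add (integrable_sg μ hmom m _) (integrable_const _)]
    simp
  · exact integrable_mav μ n (continuous_psi μ hmom m) v
  · exact integrable_sg μ hmom n v

lemma psi_sum (μ : Measure SL2) [IsProbabilityMeasure μ] (hmom : HasExpMoment μ) (n : ℕ) (v : Sph) :
    psi μ n v = ∑ j ∈ Finset.range n, mav μ j (psi μ 1) v := by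
  induction n with
  | zero => simp [psi, cv, sg, ap_id, v.2]
  | succ n ih => rw [Finset.sum_range_succ, ← ih, add_comm n 1, psi_add μ hmom, add_comm]

def emp (μ : Measure SL2) (k : ℕ) (x : Sph) : Measure Sph :=
  ((k : ENNReal) + 1)⁻¹ • ∑ j ∈ Finset.range (k + 1), (cv μ j).map (fun g => sact g x)

instance emp_prob (μ : Measure SL2) [IsProbabilityMeasure μ] (k : ℕ) (x : Sph) : IsProbabilityMeasure (emp μ k x) := by
  constructor
  have : ∀ j, IsProbabilityMeasure ((cv μ j).map (fun g => sact g x)) := fun j =>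
    Measure.isProbabilityMeasure_map (cont_sact_left x).aemeasurable
  simp only [emp, Measure.smul_apply, Measure.finsetSum_apply, measure_univ, Finset.sum_const,
    Finset.card_range, smul_eq_mul, nsmul_eq_mul, mul_one]
  push_cast
  exact ENNReal.inv_mul_cancel (by simp) (by finiteness)

lemma emp_int (μ : Measure SL2) [IsProbabilityMeasure μ] (k : ℕ) (x : Sph) {f : Sph → ℝ} (hf : Continuous f) :
    ∫ v, f v ∂(emp μ k x) = ((k : ℝ) + 1)⁻¹ * ∑ j ∈ Finset.range (k + 1), mav μ j f x := by
  have hi : ∀ j, Integrable f ((cv μ j).map (fun g => sact g x)) := fun j => by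
    rw [integrable_map_measure hf.aestronglyMeasurable (cont_sact_left x).aemeasurable]
    exact integrable_mav μ j hf x
  rw [emp, integral_smul_measure, integral_finsetSum_measure (fun j _ => hi j)]
  rw [smul_eq_mul]
  congr 1
  · rw [ENNReal.toReal_inv, ENNReal.toReal_add (by simp) (by simp)]; simp
  · refine Finset.sum_congr rfl fun j _ => ?_
    rw [integral_map (cont_sact_left x).aemeasurable hf.aestronglyMeasurable]
    rfl

lemma exists_stat (μ : Measure SL2) [IsProbabilityMeasure μ] (hmom : HasExpMoment μ) (hcon : ∀ N, ∃ v, psi μ N v < 1) :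
    ∃ ν : Measure Sph, IsProbabilityMeasure ν ∧
      (∀ f : Sph → ℝ, Continuous f → ∫ v, mav μ 1 f v ∂ν = ∫ v, f v ∂ν) ∧
      ∫ v, psi μ 1 v ∂ν ≤ 0 := by
  choose x hx using hcon
  let νs : ℕ → ProbabilityMeasure Sph := fun k => ⟨emp μ k (x (k + 1)), inferInstance⟩
  let U : Ultrafilter ℕ := hyperfilter ℕ
  have hU : (U : Filter ℕ) ≤ atTop := Nat.hyperfilter_le_atTop
  obtain ⟨ν, -, hν⟩ := isCompact_univ.ultrafilter_le_nhds (U.map νs) (by simp)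
  have ht : Tendsto νs U (nhds ν) := hν
  rw [ProbabilityMeasure.tendsto_iff_forall_integral_tendsto] at ht
  have ht' : ∀ f : Sph → ℝ, Continuous f →
      Tendsto (fun k => ∫ v, f v ∂(emp μ k (x (k + 1)))) U (nhds (∫ v, f v ∂(ν : Measure Sph))) := by
    intro f hf
    exact ht (BoundedContinuousFunction.mkOfCompact ⟨f, hf⟩)
  have h0 : Tendsto (fun k : ℕ => ((k : ℝ) + 1)⁻¹) U (nhds 0) := by
    have := tendsto_one_div_add_atTop_nhds_zero_nat (𝕜 := ℝ)
    simp only [one_div] at this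
    exact this.mono_left hU
  refine ⟨ν, inferInstance, ?_, ?_⟩
  · intro f hf
    obtain ⟨C, hC⟩ := bdd_of_cont hf
    have hb : ∀ n v, |mav μ n f v| ≤ C := by
      intro n v
      refine (norm_integral_le_of_norm_le_const (f := fun g => f (sact g v)) (C := C)
        (Eventually.of_forall fun g => hC (sact g v))).trans ?_
      simp
    have h1 := (ht' _ (continuous_mav μ 1 hf)).sub (ht' f hf)
    have h2 : Tendsto (fun k => ∫ v, mav μ 1 f v ∂(emp μ k (x (k + 1))) -
        ∫ v, f v ∂(emp μ k (x (k + 1)))) U (nhds 0) := by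
      refine squeeze_zero_norm (a := fun k : ℕ => ((k : ℝ) + 1)⁻¹ * (2 * C)) (fun k => ?_) ?_
      · rw [emp_int _ _ _ (continuous_mav μ 1 hf), emp_int _ _ _ hf, ← mul_sub,
          ← Finset.sum_sub_distrib]
        have e : ∑ j ∈ Finset.range (k + 1), (mav μ j (mav μ 1 f) (x (k + 1)) -
            mav μ j f (x (k + 1))) = mav μ (k + 1) f (x (k + 1)) - mav μ 0 f (x (k + 1)) := by
          rw [← Finset.sum_range_sub (fun j => mav μ j f (x (k + 1)))]
          refine Finset.sum_congr rfl fun j _ => ?_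
          rw [← mav_add μ 1 j hf, add_comm 1 j]
        rw [e, norm_mul, Real.norm_of_nonneg (by positivity)]
        gcongr
        have := abs_sub (mav μ (k + 1) f (x (k + 1))) (mav μ 0 f (x (k + 1)))
        rw [Real.norm_eq_abs]
        linarith [hb (k + 1) (x (k + 1)), hb 0 (x (k + 1))]
      · simpa using h0.mul_const (2 * C)
    exact sub_eq_zero.1 (tendsto_nhds_unique h1 h2)
  · refine le_of_tendsto_of_tendsto' (ht' _ (continuous_psi μ hmom 1)) h0 fun k => ?_
    rw [emp_int _ _ _ (continuous_psi μ hmom 1), ← psi_sum μ hmom]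
    have := hx (k + 1)
    have hk : 0 < ((k : ℝ) + 1)⁻¹ := by positivity
    nlinarith

lemma stat_meas (μ : Measure SL2) [IsProbabilityMeasure μ] (ν : Measure Sph) [IsProbabilityMeasure ν]
    (hst : ∀ f : Sph → ℝ, Continuous f → ∫ v, mav μ 1 f v ∂ν = ∫ v, f v ∂ν) :
    (μ.prod ν).map (fun p => sact p.1 p.2) = ν := by
  have hm : Measurable fun p : SL2 × Sph => sact p.1 p.2 := continuous_sact.measurable
  have : IsProbabilityMeasure ((μ.prod ν).map (fun p => sact p.1 p.2)) :=
    Measure.isProbabilityMeasure_map hm.aemeasurable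
  apply ext_of_forall_integral_eq_of_IsFiniteMeasure
  intro f
  rw [← hst f f.continuous, integral_map hm.aemeasurable f.continuous.aestronglyMeasurable,
    integral_prod_symm]
  · simp only [mav, cv_one]
  · exact Integrable.of_bound (f.continuous.comp continuous_sact).aestronglyMeasurable ‖f‖
      (Eventually.of_forall fun p => f.norm_coe_le_norm _)

lemma sact_inv (g : SL2) (v : Sph) : sact g⁻¹ (sact g v) = v := by
  rw [← sact_mul, inv_mul_cancel, sact_one]

lemma sact_inv' (g : SL2) (v : Sph) : sact g (sact g⁻¹ v) = v := by
  rw [← sact_mul, mul_inv_cancel, sact_one]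

lemma stat_atom (μ : Measure SL2) [IsProbabilityMeasure μ] (ν : Measure Sph) [IsProbabilityMeasure ν]
    (hst : (μ.prod ν).map (fun p => sact p.1 p.2) = ν) (x : Sph) :
    ν {x} = ∫⁻ g, ν {sact g⁻¹ x} ∂μ := by
  have hm : Measurable fun p : SL2 × Sph => sact p.1 p.2 := continuous_sact.measurable
  conv_lhs => rw [← hst]
  rw [Measure.map_apply hm (measurableSet_singleton x),
    Measure.prod_apply (hm (measurableSet_singleton x))]
  refine lintegral_congr fun g => ?_
  congr 1
  ext v
  constructor
  · intro h
    have h' : sact g v = x := h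
    rw [Set.mem_singleton_iff, ← h', sact_inv]
  · intro h
    rw [Set.mem_singleton_iff] at h
    change sact g v = x
    rw [h, sact_inv']

lemma inv_pres (F : Set Sph) (hF : F.Finite) (g : SL2) (h : ∀ x ∈ F, sact g x ∈ F) :
    ∀ x ∈ F, sact g⁻¹ x ∈ F := by
  have hs := Set.surj_on_of_inj_on_of_ncard_le (fun a _ => sact g a) h (fun a b _ _ hab => by
    have hab : sact g a = sact g b := hab
    rw [← sact_inv g a, hab, sact_inv]) le_rfl hF
  intro x hx
  obtain ⟨y, hy, rfl⟩ := hs x hx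
  rw [sact_inv]
  exact hy

lemma stat_noatom (μ : Measure SL2) [IsProbabilityMeasure μ] (hzd : ZariskiDense μ)
    (ν : Measure Sph) [IsProbabilityMeasure ν]
    (hst : (μ.prod ν).map (fun p => sact p.1 p.2) = ν) (x : Sph) : ν {x} = 0 := by
  by_contra hx
  have hfin : ∀ c : ENNReal, 0 < c → {y : Sph | c ≤ ν {y}}.Finite := fun c hc =>
    Measure.finite_const_le_meas_of_disjoint_iUnion ν hc (fun y => measurableSet_singleton y)
      (fun a b hab => by simpa [Function.onFun] using hab) (measure_ne_top _ _)
  obtain ⟨z, hz, hmax⟩ := (hfin (ν {x}) (pos_iff_ne_zero.2 hx)).exists_maximalFor (fun y => ν {y}) _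
    ⟨x, (le_rfl : ν {x} ≤ ν {x})⟩
  have hz' : ν {x} ≤ ν {z} := hz
  have hmax' : ∀ y, ν {y} ≤ ν {z} := by
    intro y
    rcases le_total (ν {y}) (ν {z}) with h | h
    · exact h
    · exact hmax (hz'.trans h : ν {x} ≤ ν {y}) h
  set M := ν {z} with hM
  have hMpos : 0 < M := (pos_iff_ne_zero.2 hx).trans_le hz'
  set F : Set Sph := {y | M ≤ ν {y}} with hFdef
  have hF : F.Finite := hfin M hMpos
  have hFeq : ∀ y ∈ F, ν {y} = M := fun y hy => le_antisymm (hmax' y) hy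
  have hae : ∀ y ∈ F, ∀ᵐ g ∂μ, sact g⁻¹ y ∈ F := by
    intro y hy
    have h1 := stat_atom μ ν hst y
    rw [hFeq y hy] at h1
    have hmeas : Measurable fun g : SL2 => ν {sact g⁻¹ y} := by
      have hm : Measurable fun p : SL2 × Sph => sact p.1 p.2 := continuous_sact.measurable
      have := measurable_measure_prodMk_left (ν := ν) (hm (measurableSet_singleton y))
      convert this using 2 with g
      congr 1
      ext v
      constructor
      · intro h
        rw [Set.mem_singleton_iff] at h
        change sact g v = y
        rw [h, sact_inv']
      · intro h
        have h' : sact g v = y := h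
        rw [Set.mem_singleton_iff, ← h', sact_inv]
    have h2 : ∫⁻ g, (M - ν {sact g⁻¹ y}) ∂μ = 0 := by
      rw [lintegral_sub hmeas (by rw [← h1]; exact measure_ne_top _ _)
        (Eventually.of_forall fun g => hmax' _), ← h1]
      simp
    have h2' := (lintegral_eq_zero_iff (f := fun g => M - ν {sact g⁻¹ y})
      (measurable_const.sub hmeas)).1 h2
    filter_upwards [h2'] with g hg
    exact tsub_eq_zero_iff_le.1 hg
  have hae' : ∀ᵐ g ∂μ, g ∈ {g : SL2 | ∀ y ∈ F, sact g⁻¹ y ∈ F} := by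
    have := (ae_ball_iff hF.countable (μ := μ) (p := fun g y _ => sact g⁻¹ y ∈ F)).2 hae
    exact this
  have hclosed : IsClosed {g : SL2 | ∀ y ∈ F, sact g⁻¹ y ∈ F} := by
    have : {g : SL2 | ∀ y ∈ F, sact g⁻¹ y ∈ F} = ⋂ y ∈ F, (fun g : SL2 => sact g⁻¹ y) ⁻¹' F := by
      ext g; simp
    rw [this]
    exact isClosed_biInter fun y _ => hF.isClosed.preimage ((cont_sact_left y).comp continuous_inv)
  have hsupp := closed_of_ae μ _ hclosed hae'
  apply hzd
  refine solv_of_finite _ F hF ⟨z, (le_rfl : M ≤ ν {z})⟩ ?_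
  intro g hg
  induction hg using Subgroup.closure_induction with
  | mem g hg =>
    have := inv_pres F hF g⁻¹ (hsupp hg)
    rwa [inv_inv] at this
  | one => intro y hy; rwa [sact_one]
  | mul a b _ _ ha hb => intro y hy; rw [sact_mul]; exact ha _ (hb _ hy)
  | inv a _ ha => exact inv_pres F hF a ha

lemma cont_dt (w : Sph) : Continuous fun v : Sph => |dt v.1 w.1| := by
  have h0 : Continuous fun v : Sph => v.1 0 := (continuous_apply 0).comp continuous_subtype_val
  have h1 : Continuous fun v : Sph => v.1 1 := (continuous_apply 1).comp continuous_subtype_val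
  unfold dt
  exact ((h0.mul continuous_const).sub (h1.mul continuous_const)).abs

lemma cont_dt' (w : Sph) : Continuous fun v : Sph => |dt w.1 v.1| := by
  have h0 : Continuous fun v : Sph => v.1 0 := (continuous_apply 0).comp continuous_subtype_val
  have h1 : Continuous fun v : Sph => v.1 1 := (continuous_apply 1).comp continuous_subtype_val
  unfold dt
  exact ((continuous_const.mul h1).sub (continuous_const.mul h0)).abs

lemma nonconc (ν : Measure Sph) [IsProbabilityMeasure ν] (hna : ∀ x, ν {x} = 0) :
    ∃ δ > (0 : ℝ), ∀ w : Sph, ν {v | |dt v.1 w.1| < δ} ≤ 1 / 4 := by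
  have key : ∃ δ > (0 : ℝ), ∀ w ∈ (Set.univ : Set Sph), ν {v | |dt v.1 w.1| < δ} ≤ 1 / 4 := by
    refine isCompact_univ.induction_on
      (p := fun S : Set Sph => ∃ δ > (0 : ℝ), ∀ w ∈ S, ν {v : Sph | |dt v.1 w.1| < δ} ≤ 1 / 4)
      ⟨1, one_pos, by simp⟩ ?_ ?_ ?_
    · rintro s t hst ⟨δ, hδ, h⟩
      exact ⟨δ, hδ, fun w hw => h w (hst hw)⟩
    · rintro s t ⟨δ, hδ, h⟩ ⟨δ', hδ', h'⟩
      refine ⟨min δ δ', lt_min hδ hδ', fun w hw => ?_⟩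
      rcases hw with hw | hw
      · refine (measure_mono (fun v hv => ?_)).trans (h w hw)
        exact lt_of_lt_of_le (show |dt v.1 w.1| < min δ δ' from hv) (min_le_left _ _)
      · refine (measure_mono (fun v hv => ?_)).trans (h' w hw)
        exact lt_of_lt_of_le (show |dt v.1 w.1| < min δ δ' from hv) (min_le_right _ _)
    · intro w _
      obtain ⟨δ, hδ, h⟩ : ∃ δ > (0 : ℝ), ν {v : Sph | |dt v.1 w.1| < δ} ≤ 1 / 4 := by
        have ht := tendsto_measure_biInter_gt (μ := ν) (a := (0 : ℝ))
          (s := fun δ => {v : Sph | |dt v.1 w.1| < δ})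
          (fun r _ => (isOpen_lt (cont_dt w) continuous_const).measurableSet.nullMeasurableSet)
          (fun i j _ hij v hv => lt_of_lt_of_le hv hij) ⟨1, one_pos, measure_ne_top _ _⟩
        have hz : ν (⋂ r > (0 : ℝ), {v : Sph | |dt v.1 w.1| < r}) = 0 := by
          have hsub : (⋂ r > (0 : ℝ), {v : Sph | |dt v.1 w.1| < r}) ⊆ {v : Sph | dt w.1 v.1 = 0} := by
            intro v hv
            simp only [Set.mem_iInter] at hv
            have h0 : |dt v.1 w.1| ≤ 0 := le_of_forall_pos_lt_add fun r hr => by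
              rw [zero_add]; exact hv r hr
            have h1 : dt v.1 w.1 = 0 := abs_eq_zero.1 (le_antisymm h0 (abs_nonneg _))
            change dt w.1 v.1 = 0
            unfold dt at h1 ⊢
            linarith
          have hfin : {v : Sph | dt w.1 v.1 = 0}.Finite := by
            have : {v : Sph | dt w.1 v.1 = 0} ⊆ Subtype.val ⁻¹' {w.1, -w.1} := by
              intro v hv
              obtain ⟨c, hc⟩ := parallel (u := w) (x := v) hv
              have h1 : enorm2 v.1 = |c| * enorm2 w.1 := by rw [hc, enorm2_smul]
              rw [v.2, w.2, mul_one] at h1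
              rcases (abs_eq zero_le_one).1 h1.symm with h | h
              · left; rw [hc, h, one_smul]
              · right; rw [Set.mem_singleton_iff, hc, h, neg_smul, one_smul]
            exact (Set.Finite.preimage (Subtype.val_injective.injOn) (Set.toFinite _)).subset this
          refine measure_mono_null hsub ?_
          rw [← Set.biUnion_of_singleton {v : Sph | dt w.1 v.1 = 0}]
          exact (measure_biUnion_null_iff hfin.countable).2 fun v _ => hna v
        rw [hz] at ht
        have h2 := (ht.eventually (gt_mem_nhds (show (0 : ENNReal) < 1 / 4 by simp))).and
          self_mem_nhdsWithin
        obtain ⟨δ, h3, h4⟩ := h2.exists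
        exact ⟨δ, h4, h3.le⟩
      refine ⟨{w' : Sph | |dt w.1 w'.1| < δ / 2}, ?_, δ / 2, half_pos hδ, ?_⟩
      · rw [nhdsWithin_univ]
        refine (isOpen_lt (cont_dt' w) continuous_const).mem_nhds ?_
        have : dt w.1 w.1 = 0 := by unfold dt; ring
        change |dt w.1 w.1| < δ / 2
        rw [this, abs_zero]
        exact half_pos hδ
      · intro w' hw'
        refine (measure_mono fun v hv => ?_).trans h
        have h1 : |dt v.1 w'.1| < δ / 2 := hv
        have h2 : |dt w.1 w'.1| < δ / 2 := hw'
        change |dt v.1 w.1| < δ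
        linarith [dt_triangle v w w']
  obtain ⟨δ, hδ, h⟩ := key
  exact ⟨δ, hδ, fun w => h w trivial⟩

lemma sg_lower (ν : Measure Sph) [IsProbabilityMeasure ν] (hna : ∀ x, ν {x} = 0) :
    ∃ C, ∀ g, Real.log (NN g) / 2 - C ≤ ∫ v, sg g v ∂ν := by
  obtain ⟨δ, hδ, h⟩ := nonconc ν hna
  refine ⟨|Real.log (δ / 2)|, fun g => ?_⟩
  obtain ⟨w, hw, hd⟩ := exists_dir g
  set A : Set Sph := {v | |dt v.1 w| < δ} with hA
  have hAm : MeasurableSet A := (isOpen_lt (cont_dt ⟨w, hw⟩) continuous_const).measurableSet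
  have hA4 : ν.real A ≤ 1 / 4 := by
    have := ENNReal.toReal_mono (by simp) (h ⟨w, hw⟩)
    simpa [Measure.real] using this
  have hA0 : 0 ≤ ν.real A := measureReal_nonneg
  set L := Real.log (NN g) with hL
  have hL0 : 0 ≤ L := logNN_nonneg g
  set c := |Real.log (δ / 2)| with hc
  have hpt : ∀ v, L - c - A.indicator (fun _ => 2 * L) v ≤ sg g v := by
    intro v
    by_cases hv : v ∈ A
    · rw [Set.indicator_of_mem hv]
      have := abs_le.1 (abs_sg_le g v)
      have : 0 ≤ c := abs_nonneg _
      linarith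
    · rw [Set.indicator_of_notMem hv, sub_zero]
      have hv' : δ ≤ |dt v.1 w| := not_lt.1 hv
      have h1 : NN g * (δ / 2) ≤ enorm2 (ap g v.1) := by
        refine le_trans ?_ (hd v.1)
        have := NN_pos g
        nlinarith
      have h2 := Real.log_le_log (mul_pos (NN_pos g) (half_pos hδ)) h1
      rw [Real.log_mul (NN_pos g).ne' (half_pos hδ).ne'] at h2
      have h3 : -c ≤ Real.log (δ / 2) := neg_abs_le _
      unfold sg
      linarith
  have hi1 : Integrable (fun v => A.indicator (fun _ => 2 * L) v) ν :=
    (integrable_const (2 * L)).indicator hAm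
  have hi2 : Integrable (fun v => sg g v) ν :=
    Integrable.of_bound (cont_sg_right g).aestronglyMeasurable L
      (Eventually.of_forall fun v => abs_sg_le g v)
  have h1 := integral_mono (((integrable_const (L - c)).sub hi1)) hi2 hpt
  simp only [Pi.sub_apply] at h1
  rw [integral_sub (integrable_const _) hi1, integral_indicator hAm] at h1
  simp at h1
  nlinarith

theorem drift_pos (μ : Measure SL2) [IsProbabilityMeasure μ] (hmom : HasExpMoment μ)
    (hzd : ZariskiDense μ) : ∃ N, ∀ v, 1 ≤ psi μ N v := by
  by_contra hcon
  push Not at hcon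
  obtain ⟨ν, hν, hst, hneg⟩ := exists_stat μ hmom hcon
  have hna := stat_noatom μ hzd ν (stat_meas μ ν hst)
  obtain ⟨C, hC⟩ := sg_lower ν hna
  have hIntg : ∀ f : Sph → ℝ, Continuous f → Integrable f ν := by
    intro f hf
    obtain ⟨C, hC⟩ := bdd_of_cont hf
    exact Integrable.of_bound hf.aestronglyMeasurable C (Eventually.of_forall hC)
  have hpsi : ∀ n, ∫ v, psi μ n v ∂ν ≤ 0 := by
    intro n
    induction n with
    | zero => simp [psi_sum μ hmom]
    | succ n ih =>
      have : ∀ v, psi μ (n + 1) v = mav μ 1 (psi μ n) v + psi μ 1 v := psi_add μ hmom n 1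
      simp only [this]
      rw [integral_add (hIntg _ (continuous_mav μ 1 (continuous_psi μ hmom n)))
        (hIntg _ (continuous_psi μ hmom 1)), hst _ (continuous_psi μ hmom n)]
      linarith
  have hK : ∀ n, ∫ g, Real.log (NN g) ∂(cv μ n) ≤ 2 * C := by
    intro n
    have hprod : Integrable (fun p : SL2 × Sph => sg p.1 p.2) ((cv μ n).prod ν) :=
      ((log_mom μ hmom n).comp_fst ν).mono' continuous_sg.aestronglyMeasurable
        (Eventually.of_forall fun p => abs_sg_le p.1 p.2)
    have h1 : ∫ v, psi μ n v ∂ν = ∫ g, ∫ v, sg g v ∂ν ∂(cv μ n) := by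
      unfold psi
      rw [← integral_prod_symm _ hprod, ← integral_prod _ hprod]
    have h2 := hpsi n
    rw [h1] at h2
    have h3 := integral_mono (((log_mom μ hmom n).div_const 2).sub (integrable_const C))
      hprod.integral_prod_left hC
    simp only [Pi.sub_apply] at h3
    rw [integral_sub ((log_mom μ hmom n).div_const 2) (integrable_const C), integral_div] at h3
    simp at h3
    linarith
  obtain ⟨n, hn⟩ := NN_decay μ hzd (Real.exp (-2 * (2 * C))) (Real.exp_pos _)
  have hpt : ∀ g, Real.exp (-2 * (2 * C)) * (1 + 4 * C - 2 * Real.log (NN g)) ≤ (NN g ^ 2)⁻¹ := by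
    intro g
    have e : (NN g ^ 2)⁻¹ = Real.exp (-2 * (2 * C)) * Real.exp (4 * C - 2 * Real.log (NN g)) := by
      rw [← Real.exp_add, show -2 * (2 * C) + (4 * C - 2 * Real.log (NN g)) =
        -(Real.log (NN g) + Real.log (NN g)) by ring, Real.exp_neg, Real.exp_add,
        Real.exp_log (NN_pos g), sq]
    rw [e]
    gcongr
    have := Real.add_one_le_exp (4 * C - 2 * Real.log (NN g))
    linarith
  have hi := ((integrable_const (μ := cv μ n) (1 + 4 * C)).sub ((log_mom μ hmom n).const_mul 2))
  have h4 := integral_mono (hi.const_mul (Real.exp (-2 * (2 * C)))) (integrable_NNinv (cv μ n)) hpt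
  rw [integral_const_mul] at h4
  simp only [Pi.sub_apply] at h4
  rw [integral_sub (integrable_const _) ((log_mom μ hmom n).const_mul 2), integral_const_mul] at h4
  simp only [integral_const, probReal_univ, one_smul] at h4
  have h5 := hK n
  have h6 := Real.exp_pos (-2 * (2 * C))
  nlinarith

lemma exp_neg_le (y : ℝ) : Real.exp (-y) ≤ 1 - y + y ^ 2 * Real.exp |y| := by
  have h := Complex.norm_exp_sub_sum_le_norm_mul_exp ((-y : ℝ) : ℂ) 2
  have e : Complex.exp ((-y : ℝ) : ℂ) - ∑ m ∈ Finset.range 2, ((-y : ℝ) : ℂ) ^ m / (m.factorial : ℂ) =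
      ((Real.exp (-y) - (1 - y) : ℝ) : ℂ) := by
    simp [Finset.sum_range_succ]
    ring
  rw [e, Complex.norm_real, Complex.norm_real, Real.norm_eq_abs, Real.norm_eq_abs, abs_neg,
    sq_abs] at h
  have := (abs_le.1 h).2
  linarith

theorem contraction (μ : Measure SL2) [IsProbabilityMeasure μ] (hmom : HasExpMoment μ)
    (hzd : ZariskiDense μ) : ∃ N, ∃ ε > (0 : ℝ), ∃ a : ℝ, 0 ≤ a ∧ a < 1 ∧ ∀ v : Sph,
      ∫⁻ g, ENNReal.ofReal (Real.exp (-ε * sg g v)) ∂(cv μ N) ≤ ENNReal.ofReal a := by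
  obtain ⟨N, hN⟩ := drift_pos μ hmom hzd
  obtain ⟨ε, hε, hi⟩ := exp_mom μ hmom
  set D := 16 / ε ^ 2 * ∫ g, NN g ^ ε ∂(cv μ N) with hD
  have hD0 : 0 ≤ D :=
    mul_nonneg (by positivity) (integral_nonneg fun g => Real.rpow_nonneg (NN_pos g).le _)
  obtain ⟨t, ht0, ht1, ht2⟩ : ∃ t > (0 : ℝ), t ≤ ε / 2 ∧ t ≤ 1 / (2 * (D + 1)) :=
    ⟨min (ε / 2) (1 / (2 * (D + 1))), by positivity, min_le_left _ _, min_le_right _ _⟩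
  rw [le_div_iff₀ (by positivity)] at ht2
  have htD : 0 ≤ t * D := by positivity
  refine ⟨N, t, ht0, 1 - t / 2, by nlinarith, by linarith, fun v => ?_⟩
  have hpt : ∀ g, Real.exp (-t * sg g v) ≤ 1 - t * sg g v + t ^ 2 * (16 / ε ^ 2 * NN g ^ ε) := by
    intro g
    have h1 := exp_neg_le (t * sg g v)
    have hL := abs_sg_le g v
    have hL0 := logNN_nonneg g
    have hp := NN_pos g
    have h2 : Real.exp |t * sg g v| ≤ NN g ^ (ε / 2) := by
      rw [Real.rpow_def_of_pos hp, abs_mul, abs_of_pos ht0]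
      apply Real.exp_le_exp.2
      calc t * |sg g v| ≤ (ε / 2) * Real.log (NN g) := by gcongr
        _ = _ := by ring
    have h3 : |sg g v| ≤ NN g ^ (ε / 4) / (ε / 4) :=
      hL.trans (Real.log_le_rpow_div hp.le (by positivity))
    have h4 : (sg g v) ^ 2 ≤ 16 / ε ^ 2 * NN g ^ (ε / 2) := by
      have := pow_le_pow_left₀ (abs_nonneg _) h3 2
      rw [sq_abs, div_pow, ← Real.rpow_natCast (NN g ^ (ε / 4)), ← Real.rpow_mul hp.le] at this
      refine this.trans (le_of_eq ?_)
      rw [show ε / 4 * ((2 : ℕ) : ℝ) = ε / 2 by push_cast; ring]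
      field_simp
      norm_num
    have h5 : (t * sg g v) ^ 2 * Real.exp |t * sg g v| ≤ t ^ 2 * (16 / ε ^ 2 * NN g ^ ε) := by
      have e : NN g ^ ε = NN g ^ (ε / 2) * NN g ^ (ε / 2) := by
        rw [← Real.rpow_add hp]; congr 1; ring
      rw [e, mul_pow, mul_assoc, ← mul_assoc (16 / ε ^ 2)]
      gcongr
    rw [neg_mul]
    linarith
  have hs := integrable_sg μ hmom N v
  have hi1 := (integrable_const (μ := cv μ N) (1 : ℝ)).sub (hs.const_mul t)
  have hi2 := ((hi N).const_mul (16 / ε ^ 2)).const_mul (t ^ 2)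
  calc ∫⁻ g, ENNReal.ofReal (Real.exp (-t * sg g v)) ∂(cv μ N)
      ≤ ∫⁻ g, ENNReal.ofReal (1 - t * sg g v + t ^ 2 * (16 / ε ^ 2 * NN g ^ ε)) ∂(cv μ N) :=
        lintegral_mono fun g => ENNReal.ofReal_le_ofReal (hpt g)
    _ = ENNReal.ofReal (∫ g, (1 - t * sg g v + t ^ 2 * (16 / ε ^ 2 * NN g ^ ε)) ∂(cv μ N)) :=
        (ofReal_integral_eq_lintegral_ofReal (hi1.add hi2)
          (Eventually.of_forall fun g => (Real.exp_pos _).le.trans (hpt g))).symm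
    _ ≤ ENNReal.ofReal (1 - t / 2) := by
        apply ENNReal.ofReal_le_ofReal
        have e : ∫ g, (1 - t * sg g v + t ^ 2 * (16 / ε ^ 2 * NN g ^ ε)) ∂(cv μ N) =
            1 - t * psi μ N v + t ^ 2 * D := by
          have e1 := integral_add hi1 hi2
          have e2 := integral_sub (integrable_const (μ := cv μ N) (1 : ℝ)) (hs.const_mul t)
          simp only [Pi.sub_apply] at e1 e2
          rw [e1, e2, integral_const_mul, integral_const_mul, integral_const_mul]
          simp [psi, hD]
        rw [e]
        have := hN v
        nlinarith

theorem renewal_operator_uniform_bound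
    (μ : Measure SL2) [IsProbabilityMeasure μ]
    (hmom : HasExpMoment μ) (hzd : ZariskiDense μ) :
    ∃ C > (0 : ℝ), ∀ (s t : ℝ) (x : PX),
      (∑' n : ℕ, μpi μ n {g | cocycle (word g) x - t ∈ Set.Icc 0 s}) ≤
        ENNReal.ofReal (C * max 1 s) := by
  exact reduction μ (contraction μ hmom hzd)

end
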